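/- Let N ≥ 20 and let C = {x_1,…,x_M} ⊂ SO(3) satisfy min_{x_i ≠ x_j} ω(x_j⁻¹x_i) ≥ 36/(N+1). Take s = 8 in the construction of σ_N, let u ∈ {−1,1}^M, and let q(x) = Σ_{j=1}^M (α_{j,0}σ_N(x,x_j) + Σ_{k=1}^3 α_{j,k} X_k^y σ_N(x,x_j)) where α = (α_0,α_1,α_2,α_3) solves Kα = (u,0,0,0)ᵀ. Then |q(x)| < 1 for every x ∈ SO(3) such that ω(x_m⁻¹x) ≥ π/(2(N+1)) for all x_m ∈ C. -/

import Mathlib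

noncomputable section

abbrev Mat3 := Matrix (Fin 3) (Fin 3) ℝ

/-- membership in SO(3) -/
def IsSO3 (x : Mat3) : Prop := x.transpose * x = 1 ∧ x.det = 1

/-- rotation angle -/
def rotAngle (x : Mat3) : ℝ := Real.arccos ((Matrix.trace x - 1) / 2)

/-- generators of so(3) -/
def Lgen : Fin 3 → Mat3 :=
  ![!![0, 0, 0; 0, 0, -1; 0, 1, 0],
    !![0, 0, 1; 0, 0, 0; -1, 0, 0],
    !![0, -1, 0; 1, 0, 0; 0, 0, 0]]

/-- derivative in the first variable along generator `i` -/
def Xx (i : Fin 3) (f : Mat3 → Mat3 → ℝ) : Mat3 → Mat3 → ℝ :=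
  fun x y => deriv (fun t : ℝ => f (x * NormedSpace.exp (t • Lgen i)) y) 0

/-- derivative in the second variable along generator `i` -/
def Xy (i : Fin 3) (f : Mat3 → Mat3 → ℝ) : Mat3 → Mat3 → ℝ :=
  fun x y => deriv (fun t : ℝ => f x (y * NormedSpace.exp (t • Lgen i))) 0

/-- iterated integrals of the sign of the Chebyshev polynomial: the perfect B-spline chain -/
def fspline (s : ℕ) : ℕ → ℝ → ℝ
  | 0 => fun x => (-1 : ℝ) ^ (s - 1) * Real.sign ((Polynomial.Chebyshev.U ℝ ((s : ℤ) - 1)).eval x)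
  | (k + 1) => fun x => ∫ t in (-1 : ℝ)..x, fspline s k t

/-- the scaled perfect B-spline g̃_{s-1} -/
def gtilde (s : ℕ) (x : ℝ) : ℝ := fspline s (s - 1) (2 * x)

/-- discrete norm ‖g̃‖_{1,N} -/
def gnorm (s N : ℕ) : ℝ :=
  ∑ k ∈ Finset.Icc (-(N : ℤ)) (N : ℤ), gtilde s ((k : ℝ) / (2 * ((N : ℝ) + 1)))

/-- the trigonometric kernel σ̃_N (real-valued) -/
def sigmaT (s N : ℕ) (t : ℝ) : ℝ :=
  ((1 / (gnorm s N : ℂ)) *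
      ∑ k ∈ Finset.Icc (-(N : ℤ)) (N : ℤ),
        (gtilde s ((k : ℝ) / (2 * ((N : ℝ) + 1))) : ℂ) * Complex.exp ((k : ℂ) * t * Complex.I)).re

/-- the zonal kernel σ_N on SO(3) -/
def sigmaK (s N : ℕ) (x y : Mat3) : ℝ := sigmaT s N (rotAngle (y⁻¹ * x))

/-- rotation axis components -/
def axisComp : Fin 3 → Mat3 → ℝ :=
  ![fun x => (x 2 1 - x 1 2) / (2 * Real.sin (rotAngle x)),
    fun x => (x 0 2 - x 2 0) / (2 * Real.sin (rotAngle x)),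
    fun x => (x 1 0 - x 0 1) / (2 * Real.sin (rotAngle x))]

/-- Levi-Civita symbol on `Fin 3` -/
def eps3 (a b c : Fin 3) : ℝ :=
  if (a, b, c) = (0, 1, 2) ∨ (a, b, c) = (1, 2, 0) ∨ (a, b, c) = (2, 0, 1) then 1
  else if (a, b, c) = (2, 1, 0) ∨ (a, b, c) = (1, 0, 2) ∨ (a, b, c) = (0, 2, 1) then -1
  else 0

/-- constants c_{l,s} -/
def cConst : ℕ → ℕ → ℝ
  | 0, s => 1.02 * (Nat.factorial (s - 1)) * 2 ^ s * s
  | 1, s => 1.02 * (Nat.factorial (s - 1)) * 2 ^ s * (2 * s)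
  | 2, s => 1.02 * (Nat.factorial (s - 1)) * 2 ^ s * (4 * s + 1)
  | _, s => 1.02 * (Nat.factorial (s - 1)) * 2 ^ s * (9 * s - 2)

/-- ζ(m) for natural m -/
def zetaNat (m : ℕ) : ℝ := ∑' n : ℕ, (1 : ℝ) / ((n : ℝ) + 1) ^ m

/-- constants C_{i,s} = 124 c_{i,s} ζ(s-2) -/
def CConst (i s : ℕ) : ℝ := 124 * cConst i s * zetaNat (s - 2)

end

open scoped Real

/-- block selector: 0 ↦ kernel, p ↦ derivative along generator p−1 -/
def toOp : Fin 4 → Option (Fin 3) := ![none, some 0, some 1, some 2]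

/-- the (p,q) block kernel of the interpolation matrix -/
noncomputable def Kblock (s N : ℕ) (p q : Fin 4) : Mat3 → Mat3 → ℝ :=
  match toOp p, toOp q with
  | none, none => sigmaK s N
  | none, some j => Xx j (sigmaK s N)
  | some i, none => Xy i (sigmaK s N)
  | some i, some j => Xx j (Xy i (sigmaK s N))

/-- the 4M × 4M interpolation matrix K -/
noncomputable def Kmat (s N : ℕ) {M : ℕ} (x : Fin M → Mat3) :
    Matrix (Fin 4 × Fin M) (Fin 4 × Fin M) ℝ :=
  Matrix.of fun pa qb => Kblock s N pa.1 qb.1 (x pa.2) (x qb.2)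

/-- right-hand side (u,0,0,0)ᵀ -/
def rhsVec {M : ℕ} (u : Fin M → ℝ) : Fin 4 × Fin M → ℝ :=
  fun pa => if pa.1 = 0 then u pa.2 else 0

namespace RotationKernel

/-! ### Knots of the perfect B-spline -/

/-- `cos (π / 8)` -/
noncomputable def knotA : ℝ := √(2 + √2) / 2

/-- `cos (π / 4)` -/
noncomputable def knotB : ℝ := √2 / 2

/-- `cos (3 π / 8)` -/
noncomputable def knotC : ℝ := √(2 - √2) / 2

lemma sqrt_two_bounds : 1.41421 < √2 ∧ √2 < 1.41422 := by
  constructor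
  · exact Real.lt_sqrt_of_sq_lt (by norm_num)
  · rw [Real.sqrt_lt' (by norm_num)]; norm_num

lemma knotA_sq : knotA ^ 2 = (2 + √2) / 4 := by
  rw [knotA, div_pow, Real.sq_sqrt (by positivity)]; norm_num

lemma knotB_sq : knotB ^ 2 = 1 / 2 := by
  rw [knotB, div_pow, Real.sq_sqrt (by positivity)]; norm_num

lemma knotC_sq : knotC ^ 2 = (2 - √2) / 4 := by
  rw [knotC, div_pow, Real.sq_sqrt (by have := sqrt_two_bounds; linarith)]; norm_num

lemma knotA_bounds : 0.92387 < knotA ∧ knotA < 0.92389 := by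
  have h := knotA_sq
  have h2 := sqrt_two_bounds
  have h0 : 0 ≤ knotA := by unfold knotA; positivity
  constructor <;> nlinarith

lemma knotB_bounds : 0.7071 < knotB ∧ knotB < 0.70711 := by
  have h2 := sqrt_two_bounds
  unfold knotB
  constructor <;> linarith

lemma knotC_bounds : 0.38268 < knotC ∧ knotC < 0.38269 := by
  have h := knotC_sq
  have h2 := sqrt_two_bounds
  have h0 : 0 ≤ knotC := by unfold knotC; positivity
  constructor <;> nlinarith

/-- the knots `-cos (j π / 8)` -/
noncomputable def knot : Fin 9 → ℝ :=
  ![-1, -knotA, -knotB, -knotC, 0, knotC, knotB, knotA, 1]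

/-- jumps of the sign function of the Chebyshev polynomial at the knots -/
def jump : Fin 9 → ℝ := ![1, -2, 2, -2, 2, -2, 2, -2, 1]

lemma sum_fin_nine (f : Fin 9 → ℝ) : ∑ j, f j =
    f 0 + f 1 + f 2 + f 3 + f 4 + f 5 + f 6 + f 7 + f 8 := by
  simp [Fin.sum_univ_succ, ← add_assoc]

lemma abs_knot_le_one (j : Fin 9) : |knot j| ≤ 1 := by
  have hA := knotA_bounds
  have hB := knotB_bounds
  have hC := knotC_bounds
  rw [abs_le]
  fin_cases j <;> simp [knot] <;> constructor <;> linarith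

lemma sum_abs_jump : ∑ j, |jump j| = 16 := by
  rw [sum_fin_nine]; simp only [jump, Matrix.cons_val]; norm_num

lemma even_power_sum (n : ℕ) : knotA ^ (2 * n) = ((2 + √2) / 4) ^ n ∧
    knotB ^ (2 * n) = (1 / 2) ^ n ∧ knotC ^ (2 * n) = ((2 - √2) / 4) ^ n := by
  refine ⟨?_, ?_, ?_⟩ <;> rw [pow_mul]
  · rw [knotA_sq]
  · rw [knotB_sq]
  · rw [knotC_sq]

lemma sum_jump_mul_knot_pow_odd (n : ℕ) : ∑ j, jump j * knot j ^ (2 * n + 1) = 0 := by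
  rw [sum_fin_nine]
  simp [jump, knot, pow_succ, pow_mul]

lemma sum_jump_mul_knot_pow_even (n : ℕ) : ∑ j, jump j * knot j ^ (2 * (n + 1)) =
    2 - 4 * ((2 + √2) / 4) ^ (n + 1) + 4 * (1 / 2) ^ (n + 1) - 4 * ((2 - √2) / 4) ^ (n + 1) := by
  rw [sum_fin_nine]
  have h := even_power_sum (n + 1)
  have e : Even (2 * (n + 1)) := even_two_mul _
  simp only [jump, knot, Matrix.cons_val, e.neg_pow, h.1, h.2.1, h.2.2]
  rw [zero_pow (by omega)]
  ring

/-- The alternating power sums of the knots. -/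
lemma sum_jump_mul_knot_pow_eq_zero {m : ℕ} (hm : m ≤ 7) : ∑ j, jump j * knot j ^ m = 0 := by
  have h2 : √2 ^ 2 = 2 := Real.sq_sqrt (by norm_num)
  obtain ⟨n, rfl | rfl⟩ := Nat.even_or_odd' m
  · rcases n with _ | n
    · rw [sum_fin_nine]; simp only [jump, Matrix.cons_val]; norm_num
    · rw [sum_jump_mul_knot_pow_even]
      have : n ≤ 2 := by omega
      interval_cases n
      · ring
      · linear_combination (-1 / 2) * h2
      · linear_combination (-3 / 4) * h2
  · exact sum_jump_mul_knot_pow_odd n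

lemma sum_jump_mul_knot_pow_eight : ∑ j, jump j * knot j ^ 8 = 1 / 8 := by
  have h2 : √2 ^ 2 = 2 := Real.sq_sqrt (by norm_num)
  rw [show 8 = 2 * (3 + 1) by norm_num, sum_jump_mul_knot_pow_even]
  linear_combination (-3 / 4 - (√2 ^ 2 + 2) / 32) * h2

lemma sum_jump_mul_knot_pow_ten : ∑ j, jump j * knot j ^ 10 = 5 / 16 := by
  have h2 : √2 ^ 2 = 2 := Real.sq_sqrt (by norm_num)
  rw [show 10 = 2 * (4 + 1) by norm_num, sum_jump_mul_knot_pow_even]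
  linear_combination (-5 / 8 - 5 * (√2 ^ 2 + 2) / 64) * h2

lemma sum_jump_mul_knot_pow_twelve : ∑ j, jump j * knot j ^ 12 = 33 / 64 := by
  have h2 : √2 ^ 2 = 2 := Real.sq_sqrt (by norm_num)
  have h4 : √2 ^ 4 = 4 := by rw [show √2 ^ 4 = (√2 ^ 2) ^ 2 by ring, h2]; norm_num
  have h6 : √2 ^ 6 = 8 := by rw [show √2 ^ 6 = (√2 ^ 2) ^ 3 by ring, h2]; norm_num
  rw [show 12 = 2 * (5 + 1) by norm_num, sum_jump_mul_knot_pow_even]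
  ring_nf
  rw [h2, h4, h6]
  norm_num

/-! ### Truncated powers and the spline family -/

/-- the truncated power `u_+ ^ k` (right-continuous for `k = 0`) -/
noncomputable def posPow (k : ℕ) (u : ℝ) : ℝ := if 0 ≤ u then u ^ k else 0

lemma posPow_of_nonneg (k : ℕ) {u : ℝ} (hu : 0 ≤ u) : posPow k u = u ^ k := if_pos hu

lemma posPow_of_neg (k : ℕ) {u : ℝ} (hu : u < 0) : posPow k u = 0 := if_neg hu.not_ge

lemma posPow_succ_of_nonpos (k : ℕ) {u : ℝ} (hu : u ≤ 0) : posPow (k + 1) u = 0 := by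
  rcases hu.lt_or_eq with h | rfl
  · exact posPow_of_neg _ h
  · simp [posPow]

lemma posPow_succ (k : ℕ) (u : ℝ) : posPow (k + 1) u = u * posPow k u := by
  unfold posPow; split_ifs <;> ring

lemma posPow_succ_eq_max (k : ℕ) (u : ℝ) : posPow (k + 1) u = max u 0 ^ (k + 1) := by
  rcases le_total 0 u with h | h
  · rw [posPow_of_nonneg _ h, max_eq_left h]
  · rw [posPow_succ_of_nonpos _ h, max_eq_right h]; simp

lemma continuous_posPow_succ (k : ℕ) : Continuous (posPow (k + 1)) := by
  rw [show posPow (k + 1) = fun u => max u 0 ^ (k + 1) from funext (posPow_succ_eq_max k)]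
  fun_prop

lemma hasDerivAt_posPow_of_ne (k : ℕ) {u : ℝ} (hu : u ≠ 0) :
    HasDerivAt (posPow (k + 1)) ((k + 1) * posPow k u) u := by
  rcases lt_or_gt_of_ne hu with h | h
  · rw [posPow_of_neg _ h, mul_zero]
    refine (hasDerivAt_const u (0 : ℝ)).congr_of_eventuallyEq ?_
    filter_upwards [Iio_mem_nhds h] with v hv using posPow_of_neg _ hv
  · rw [posPow_of_nonneg _ h.le]
    have := hasDerivAt_pow (k + 1) u
    simp only [Nat.add_sub_cancel] at this
    push_cast at this
    refine this.congr_of_eventuallyEq ?_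
    filter_upwards [Ioi_mem_nhds h] with v hv using posPow_of_nonneg _ (le_of_lt hv)

lemma measurable_posPow (k : ℕ) : Measurable (posPow k) :=
  Measurable.ite measurableSet_Ici (by fun_prop) measurable_const

lemma intervalIntegrable_posPow (k : ℕ) (a b : ℝ) :
    IntervalIntegrable (posPow k) MeasureTheory.volume a b := by
  have hc : Continuous fun u : ℝ => u ^ k := by fun_prop
  refine (hc.intervalIntegrable a b).mono_fun (measurable_posPow k).aestronglyMeasurable ?_
  refine Filter.Eventually.of_forall fun u => ?_
  simp only [posPow]
  split_ifs <;> simp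

lemma integral_posPow (k : ℕ) (a b : ℝ) :
    ∫ u in a..b, posPow k u = (posPow (k + 1) b - posPow (k + 1) a) / (k + 1) := by
  have h := MeasureTheory.integral_eq_of_hasDerivAt_off_countable
    (f := posPow (k + 1)) (f' := fun u => (k + 1) * posPow k u) (a := a) (b := b)
    (Set.countable_singleton (0 : ℝ)) (continuous_posPow_succ k).continuousOn
    (fun u hu => hasDerivAt_posPow_of_ne k hu.2) ((intervalIntegrable_posPow k a b).const_mul _)
  rw [intervalIntegral.integral_const_mul] at h
  rw [← h]
  field_simp

lemma hasDerivAt_posPow (k : ℕ) (u : ℝ) :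
    HasDerivAt (posPow (k + 2)) ((k + 2) * posPow (k + 1) u) u := by
  have hi : ∀ x, posPow (k + 2) x = posPow (k + 2) 0 +
      ∫ v in (0 : ℝ)..x, ((k : ℝ) + 2) * posPow (k + 1) v := by
    intro x
    rw [intervalIntegral.integral_const_mul, integral_posPow]
    push_cast
    field_simp
    ring
  have hc : Continuous fun v => ((k : ℝ) + 2) * posPow (k + 1) v :=
    continuous_const.mul (continuous_posPow_succ k)
  rw [show posPow (k + 2) = _ from funext hi]
  exact (intervalIntegral.integral_hasDerivAt_right (hc.intervalIntegrable 0 u)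
    (hc.stronglyMeasurableAtFilter _ _) hc.continuousAt).const_add _

/-- the splines `∑ⱼ cⱼ tⱼ ^ l (x - tⱼ)_+ ^ k / k!`; for `l = 0` these are the perfect B-spline and
its derivatives -/
noncomputable def spl (l k : ℕ) (x : ℝ) : ℝ :=
  ∑ j, jump j * knot j ^ l * (posPow k (x - knot j) / k.factorial)

lemma intervalIntegrable_spl (l k : ℕ) (a b : ℝ) :
    IntervalIntegrable (spl l k) MeasureTheory.volume a b := by
  have hs : spl l k = ∑ j, fun x => jump j * knot j ^ l *
      (posPow k (x - knot j) / k.factorial) := by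
    ext x; simp [spl]
  rw [hs]
  refine IntervalIntegrable.sum _ fun j _ => ?_
  refine IntervalIntegrable.const_mul (IntervalIntegrable.div_const ?_ _) _
  have := (intervalIntegrable_posPow k (a - knot j) (b - knot j)).comp_sub_right (knot j)
  simpa using this

lemma integral_spl (l k : ℕ) (a b : ℝ) :
    ∫ x in a..b, spl l k x = spl l (k + 1) b - spl l (k + 1) a := by
  have hii : ∀ j, IntervalIntegrable (fun x => jump j * knot j ^ l *
      (posPow k (x - knot j) / k.factorial)) MeasureTheory.volume a b := by
    intro j
    refine IntervalIntegrable.const_mul (IntervalIntegrable.div_const ?_ _) _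
    have := (intervalIntegrable_posPow k (a - knot j) (b - knot j)).comp_sub_right (knot j)
    simpa using this
  unfold spl
  rw [intervalIntegral.integral_finsetSum (fun j _ => hii j), ← Finset.sum_sub_distrib]
  refine Finset.sum_congr rfl fun j _ => ?_
  rw [intervalIntegral.integral_const_mul, intervalIntegral.integral_div,
    intervalIntegral.integral_comp_sub_right (fun x => posPow k x) (knot j), integral_posPow,
    Nat.factorial_succ]
  push_cast
  field_simp

lemma hasDerivAt_spl (l k : ℕ) (x : ℝ) :
    HasDerivAt (spl l (k + 2)) (spl l (k + 1) x) x := by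
  unfold spl
  refine HasDerivAt.fun_sum fun j _ => ?_
  have h := ((hasDerivAt_posPow k (x - knot j)).comp x ((hasDerivAt_id x).sub_const (knot j)))
  have h2 := (h.div_const ((k + 2).factorial : ℝ)).const_mul (jump j * knot j ^ l)
  refine h2.congr_deriv ?_
  rw [Nat.factorial_succ (k + 1)]
  push_cast
  field_simp
  ring

lemma spl_of_lt (l k : ℕ) {x : ℝ} (hx : x < -1) : spl l k x = 0 := by
  refine Finset.sum_eq_zero fun j _ => ?_
  have := (abs_le.1 (abs_knot_le_one j)).1
  rw [posPow_of_neg _ (by linarith)]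
  simp

lemma spl_succ_of_le (l k : ℕ) {x : ℝ} (hx : x ≤ -1) : spl l (k + 1) x = 0 := by
  refine Finset.sum_eq_zero fun j _ => ?_
  have := (abs_le.1 (abs_knot_le_one j)).1
  rw [posPow_succ_of_nonpos _ (by linarith)]
  simp

lemma sum_jump_mul_sub_knot_pow {l k : ℕ} (h : l + k ≤ 7) (x : ℝ) :
    ∑ j, jump j * knot j ^ l * (x - knot j) ^ k = 0 := by
  simp_rw [sub_eq_add_neg, add_pow, Finset.mul_sum]
  rw [Finset.sum_comm]
  refine Finset.sum_eq_zero fun i hi => ?_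
  have hi' : i ≤ k := by simpa [Nat.lt_succ_iff] using hi
  have := sum_jump_mul_knot_pow_eq_zero (m := l + (k - i)) (by omega)
  calc _ = (x ^ i * (-1) ^ (k - i) * (k.choose i)) * ∑ j, jump j * knot j ^ (l + (k - i)) := by
        rw [Finset.mul_sum]
        refine Finset.sum_congr rfl fun j _ => ?_
        rw [neg_pow (knot j), pow_add]
        ring
    _ = 0 := by rw [this, mul_zero]

lemma spl_of_one_le {l k : ℕ} (h : l + k ≤ 7) {x : ℝ} (hx : 1 ≤ x) : spl l k x = 0 := by
  have := sum_jump_mul_sub_knot_pow h x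
  calc spl l k x = (∑ j, jump j * knot j ^ l * (x - knot j) ^ k) / k.factorial := by
        rw [spl, Finset.sum_div]
        refine Finset.sum_congr rfl fun j _ => ?_
        have := (abs_le.1 (abs_knot_le_one j)).2
        rw [posPow_of_nonneg _ (by linarith)]
        ring
    _ = 0 := by rw [this, zero_div]

/-- The spline of top order is even. -/
lemma spl_neg {k : ℕ} (hk : 2 * k + 1 ≤ 7) (x : ℝ) :
    spl 0 (2 * k + 1) (-x) = spl 0 (2 * k + 1) x := by
  have h := sum_jump_mul_sub_knot_pow (l := 0) (k := 2 * k + 1) (by omega) x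
  have hp : ∀ u : ℝ, posPow (2 * k + 1) u = u ^ (2 * k + 1) + posPow (2 * k + 1) (-u) := by
    intro u
    rcases le_total 0 u with hu | hu
    · rw [posPow_of_nonneg _ hu, posPow_succ_of_nonpos _ (by linarith)]; ring
    · rw [posPow_succ_of_nonpos _ hu, posPow_of_nonneg _ (by linarith : 0 ≤ -u)]
      rw [Odd.neg_pow ⟨k, rfl⟩]; ring
  have h1 : spl 0 (2 * k + 1) x =
      ∑ j, jump j * (posPow (2 * k + 1) (-x - -knot j) / (2 * k + 1).factorial) := by
    have : ∀ j, posPow (2 * k + 1) (x - knot j) =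
        (x - knot j) ^ (2 * k + 1) + posPow (2 * k + 1) (-x - -knot j) := by
      intro j
      rw [hp, show -(x - knot j) = -x - -knot j by ring]
    calc _ = (∑ j, jump j * knot j ^ 0 * (x - knot j) ^ (2 * k + 1)) / (2 * k + 1).factorial +
          ∑ j, jump j * (posPow (2 * k + 1) (-x - -knot j) / (2 * k + 1).factorial) := by
          rw [spl, Finset.sum_div, ← Finset.sum_add_distrib]
          refine Finset.sum_congr rfl fun j _ => ?_
          rw [this]; ring
      _ = _ := by rw [h, zero_div, zero_add]
  rw [h1, spl, ← Equiv.sum_comp Fin.revPerm]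
  refine Finset.sum_congr rfl fun j _ => ?_
  have hj : jump (Fin.revPerm j) = jump j ∧ knot (Fin.revPerm j) = - knot j := by
    fin_cases j <;> simp [jump, knot, Fin.revPerm, Fin.rev]
  rw [hj.1, hj.2]
  ring

/-! ### The iterated integrals of the sign function -/

lemma chebyshev_U_seven_eval (x : ℝ) : (Polynomial.Chebyshev.U ℝ 7).eval x =
    128 * (x + knotA) * (x + knotB) * (x + knotC) * x * (x - knotC) * (x - knotB) * (x - knotA) := by
  have h2 : √2 ^ 2 = 2 := Real.sq_sqrt (by norm_num)
  have hU : (Polynomial.Chebyshev.U ℝ 7).eval x =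
      128 * x ^ 7 - 192 * x ^ 5 + 80 * x ^ 3 - 8 * x := by
    have e (n : ℤ) := congrArg (Polynomial.eval x) (Polynomial.Chebyshev.U_add_two ℝ n)
    have e0 := e 0
    have e1 := e 1
    have e2 := e 2
    have e3 := e 3
    have e4 := e 4
    have e5 := e 5
    norm_num at e0 e1 e2 e3 e4 e5
    rw [e5, e4, e3, e2, e1, e0]
    ring
  rw [hU, show 128 * (x + knotA) * (x + knotB) * (x + knotC) * x * (x - knotC) * (x - knotB) *
    (x - knotA) = 128 * x * (x ^ 2 - knotA ^ 2) * (x ^ 2 - knotB ^ 2) * (x ^ 2 - knotC ^ 2) by ring,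
    knotA_sq, knotB_sq, knotC_sq]
  linear_combination (8 * x ^ 3 - 4 * x) * h2

lemma real_sign_mul (a b : ℝ) : Real.sign (a * b) = Real.sign a * Real.sign b := by
  rcases lt_trichotomy a 0 with ha | rfl | ha <;> rcases lt_trichotomy b 0 with hb | rfl | hb <;>
    simp [Real.sign_of_neg, Real.sign_of_pos, *, mul_pos_of_neg_of_neg, mul_neg_of_neg_of_pos,
      mul_neg_of_pos_of_neg]

lemma posPow_zero_eq_sign {u : ℝ} (hu : u ≠ 0) : posPow 0 u = (1 + Real.sign u) / 2 := by
  rcases lt_or_gt_of_ne hu with h | h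
  · rw [posPow_of_neg _ h, Real.sign_of_neg h]; norm_num
  · rw [posPow_of_nonneg _ h.le, Real.sign_of_pos h]; norm_num

lemma fspline_zero_eq_spl {x : ℝ} (h1 : -1 < x) (h2 : x < 1) (hx : ∀ j, x ≠ knot j) :
    fspline 8 0 x = spl 0 0 x := by
  have hA := knotA_bounds
  have hB := knotB_bounds
  have hC := knotC_bounds
  have hs : ∀ j, posPow 0 (x - knot j) = (1 + Real.sign (x - knot j)) / 2 := fun j =>
    posPow_zero_eq_sign (sub_ne_zero.2 (hx j))
  have hpos : ∀ t : ℝ, t < x → Real.sign (x - t) = 1 := fun t ht =>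
    Real.sign_of_pos (sub_pos.2 ht)
  have hneg : ∀ t : ℝ, x < t → Real.sign (x - t) = -1 := fun t ht =>
    Real.sign_of_neg (sub_neg.2 ht)
  have hf : fspline 8 0 x = -(Real.sign (x - knot 1) * Real.sign (x - knot 2) *
      Real.sign (x - knot 3) * Real.sign (x - knot 4) * Real.sign (x - knot 5) *
      Real.sign (x - knot 6) * Real.sign (x - knot 7)) := by
    have : ((8 : ℕ) : ℤ) - 1 = 7 := by norm_num
    simp only [fspline]
    rw [this, chebyshev_U_seven_eval]
    simp only [real_sign_mul, knot, Matrix.cons_val]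
    rw [Real.sign_of_pos (show (0 : ℝ) < 128 by norm_num)]
    simp only [sub_neg_eq_add, sub_zero]
    norm_num
  rw [hf, spl, sum_fin_nine]
  simp only [hs]
  have l0 : knot 0 < x := by simpa [knot] using h1
  have l8 : x < knot 8 := by simpa [knot] using h2
  have o1 : knot 1 < knot 2 := by simp only [knot, Matrix.cons_val]; linarith
  have o2 : knot 2 < knot 3 := by simp only [knot, Matrix.cons_val]; linarith
  have o3 : knot 3 < knot 4 := by simp only [knot, Matrix.cons_val]; linarith
  have o4 : knot 4 < knot 5 := by simp only [knot, Matrix.cons_val]; linarith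
  have o5 : knot 5 < knot 6 := by simp only [knot, Matrix.cons_val]; linarith
  have o6 : knot 6 < knot 7 := by simp only [knot, Matrix.cons_val]; linarith
  rw [hpos _ l0, hneg _ l8]
  simp only [jump, Matrix.cons_val]
  rcases lt_or_gt_of_ne (hx 4) with h4 | h4
  · rw [hneg _ h4, hneg (knot 5) (by linarith), hneg (knot 6) (by linarith),
      hneg (knot 7) (by linarith)]
    rcases lt_or_gt_of_ne (hx 2) with h | h
    · rw [hneg _ h, hneg (knot 3) (by linarith)]
      rcases lt_or_gt_of_ne (hx 1) with h | h
      · rw [hneg _ h]; norm_num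
      · rw [hpos _ h]; norm_num
    · rw [hpos _ h, hpos (knot 1) (by linarith)]
      rcases lt_or_gt_of_ne (hx 3) with h | h
      · rw [hneg _ h]; norm_num
      · rw [hpos _ h]; norm_num
  · rw [hpos _ h4, hpos (knot 3) (by linarith), hpos (knot 2) (by linarith),
      hpos (knot 1) (by linarith)]
    rcases lt_or_gt_of_ne (hx 6) with h | h
    · rw [hneg _ h, hneg (knot 7) (by linarith)]
      rcases lt_or_gt_of_ne (hx 5) with h | h
      · rw [hneg _ h]; norm_num
      · rw [hpos _ h]; norm_num
    · rw [hpos _ h, hpos (knot 5) (by linarith)]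
      rcases lt_or_gt_of_ne (hx 7) with h | h
      · rw [hneg _ h]; norm_num
      · rw [hpos _ h]; norm_num

lemma fspline_succ_eq_spl (k : ℕ) {x : ℝ} (h1 : -1 ≤ x) (h2 : x ≤ 1) :
    fspline 8 (k + 1) x = spl 0 (k + 1) x := by
  have key : ∫ t in (-1 : ℝ)..x, fspline 8 k t = ∫ t in (-1 : ℝ)..x, spl 0 k t := by
    induction k generalizing x with
    | zero =>
      refine intervalIntegral.integral_congr_ae ?_
      have hc : (Set.range knot).Countable := Set.countable_range _
      filter_upwards [hc.ae_notMem MeasureTheory.volume] with t ht hmem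
      rw [Set.uIoc_of_le h1] at hmem
      have hne : ∀ j, t ≠ knot j := fun j hj => ht ⟨j, hj.symm⟩
      have h8 : t ≠ 1 := by simpa [knot] using hne 8
      exact fspline_zero_eq_spl hmem.1 (lt_of_le_of_ne (hmem.2.trans h2) h8) hne
    | succ k ih =>
      refine intervalIntegral.integral_congr fun t ht => ?_
      rw [Set.uIcc_of_le h1] at ht
      show ∫ t in (-1 : ℝ)..t, fspline 8 k t = _
      rw [ih ht.1 (ht.2.trans h2), integral_spl, spl_succ_of_le 0 k le_rfl, sub_zero]
  simp only [fspline]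
  rw [key, integral_spl, spl_succ_of_le 0 k le_rfl, sub_zero]

/-! ### Size bounds -/

/-- Locating a point relative to the knots. -/
lemma spl_zero_bounds (x : ℝ) :
    |spl 0 0 x| ≤ 1 ∧ |spl 1 0 x| ≤ 1 ∧ |spl 0 1 x| ≤ 1 / 4 := by
  have hA := knotA_bounds
  have hB := knotB_bounds
  have hC := knotC_bounds
  by_cases hout : x < -1 ∨ 1 ≤ x
  · rcases hout with h | h
    · rw [spl_of_lt _ _ h, spl_of_lt _ _ h, spl_of_lt _ _ h]; norm_num
    · rw [spl_of_one_le (by norm_num) h, spl_of_one_le (by norm_num) h,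
        spl_of_one_le (by norm_num) h]
      norm_num
  push Not at hout
  have hp : ∀ k t, t ≤ x → posPow k (x - t) = (x - t) ^ k := fun k t ht =>
    posPow_of_nonneg _ (sub_nonneg.2 ht)
  have hn : ∀ k t, x < t → posPow k (x - t) = 0 := fun k t ht => posPow_of_neg _ (sub_neg.2 ht)
  have e : ∀ l k, spl l k x =
      (-1) ^ l * (posPow k (x - -1) / k.factorial)
      - 2 * (-knotA) ^ l * (posPow k (x - -knotA) / k.factorial)
      + 2 * (-knotB) ^ l * (posPow k (x - -knotB) / k.factorial)
      - 2 * (-knotC) ^ l * (posPow k (x - -knotC) / k.factorial)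
      + 2 * 0 ^ l * (posPow k (x - 0) / k.factorial)
      - 2 * knotC ^ l * (posPow k (x - knotC) / k.factorial)
      + 2 * knotB ^ l * (posPow k (x - knotB) / k.factorial)
      - 2 * knotA ^ l * (posPow k (x - knotA) / k.factorial)
      + posPow k (x - 1) / k.factorial := by
    intro l k
    rw [spl, sum_fin_nine]
    simp only [jump, knot, Matrix.cons_val]
    ring
  rw [e, e, e]
  simp only [hp _ _ hout.1, hn _ _ hout.2, abs_le]
  rcases lt_or_ge x 0 with h0 | h0
  · simp only [hn _ _ h0, hn _ knotC (by linarith), hn _ knotB (by linarith),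
      hn _ knotA (by linarith)]
    rcases lt_or_ge x (-knotB) with h | h
    · simp only [hn _ _ h, hn _ (-knotC) (by linarith)]
      rcases lt_or_ge x (-knotA) with h' | h'
      · simp only [hn _ _ h']; norm_num; constructor <;> linarith
      · simp only [hp _ _ h']; norm_num; refine ⟨⟨?_, ?_⟩, ?_, ?_⟩ <;> linarith
    · simp only [hp _ _ h, hp _ (-knotA) (by linarith)]
      rcases lt_or_ge x (-knotC) with h' | h'
      · simp only [hn _ _ h']; norm_num; refine ⟨⟨?_, ?_⟩, ?_, ?_⟩ <;> linarith
      · simp only [hp _ _ h']; norm_num; refine ⟨⟨?_, ?_⟩, ?_, ?_⟩ <;> linarith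
  · simp only [hp _ _ h0, hp _ (-knotC) (by linarith), hp _ (-knotB) (by linarith),
      hp _ (-knotA) (by linarith)]
    rcases lt_or_ge x knotB with h | h
    · simp only [hn _ _ h, hn _ knotA (by linarith)]
      rcases lt_or_ge x knotC with h' | h'
      · simp only [hn _ _ h']; norm_num; refine ⟨⟨?_, ?_⟩, ?_, ?_⟩ <;> linarith
      · simp only [hp _ _ h']; norm_num; refine ⟨⟨?_, ?_⟩, ?_, ?_⟩ <;> linarith
    · simp only [hp _ _ h, hp _ knotC (by linarith)]
      rcases lt_or_ge x knotA with h' | h'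
      · simp only [hn _ _ h']; norm_num; refine ⟨⟨?_, ?_⟩, ?_, ?_⟩ <;> linarith
      · simp only [hp _ _ h']; norm_num; constructor <;> linarith

lemma abs_spl_succ_le {k : ℕ} (hk : k ≤ 6) (x : ℝ) : |spl 0 (k + 1) x| ≤ 1 / 4 := by
  induction k generalizing x with
  | zero => exact (spl_zero_bounds x).2.2
  | succ k ih =>
    have hb := fun t => ih (by omega) t
    rcases le_or_gt x (-1) with h | h
    · rw [spl_succ_of_le _ _ h]; norm_num
    rcases le_or_gt 1 x with h' | h'
    · rw [spl_of_one_le (by omega) h']; norm_num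
    rcases le_total x 0 with h0 | h0
    · have e := integral_spl 0 (k + 1) (-1) x
      rw [spl_succ_of_le _ _ le_rfl, sub_zero] at e
      rw [← e]
      have := intervalIntegral.norm_integral_le_of_norm_le_const
        (f := spl 0 (k + 1)) (a := -1) (b := x) (C := 1 / 4) (fun t _ => hb t)
      rw [Real.norm_eq_abs] at this
      rw [abs_of_pos (a := x - -1) (by linarith)] at this
      linarith
    · have e := integral_spl 0 (k + 1) x 1
      rw [spl_of_one_le (by omega) le_rfl, zero_sub] at e
      rw [← abs_neg, ← e]
      have := intervalIntegral.norm_integral_le_of_norm_le_const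
        (f := spl 0 (k + 1)) (a := x) (b := 1) (C := 1 / 4) (fun t _ => hb t)
      rw [Real.norm_eq_abs] at this
      rw [abs_of_pos (a := 1 - x) (by linarith)] at this
      linarith

/-! ### Positivity -/

lemma spl_seven_eq_of_nonpos {x : ℝ} (hx : x ≤ 0) : 5040 * spl 0 7 x = max (x + 1) 0 ^ 7
    - 2 * max (x + knotA) 0 ^ 7 + 2 * max (x + knotB) 0 ^ 7 - 2 * max (x + knotC) 0 ^ 7 := by
  have hA := knotA_bounds
  have hB := knotB_bounds
  have hC := knotC_bounds
  rw [spl, sum_fin_nine]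
  simp only [jump, knot, Matrix.cons_val, posPow_succ_eq_max 6]
  rw [max_eq_right (show x - 0 ≤ 0 by linarith), max_eq_right (show x - knotC ≤ 0 by linarith),
    max_eq_right (show x - knotB ≤ 0 by linarith), max_eq_right (show x - knotA ≤ 0 by linarith),
    max_eq_right (show x - 1 ≤ 0 by linarith)]
  norm_num [Nat.factorial]
  ring

lemma spl_seven_nonneg (x : ℝ) : 0 ≤ spl 0 7 x := by
  have hA := knotA_bounds
  have hB := knotB_bounds
  have hC := knotC_bounds
  wlog hx : x ≤ 0 generalizing x
  · have h := this (-x) (by linarith)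
    rwa [spl_neg (k := 3) (by norm_num)] at h
  have e := spl_seven_eq_of_nonpos hx
  suffices 0 ≤ 5040 * spl 0 7 x by linarith
  rw [e]
  have hBC : max (x + knotC) 0 ^ 7 ≤ max (x + knotB) 0 ^ 7 := by gcongr; linarith
  rcases le_or_gt x (-(1 / 5)) with h | h
  · have h1 : max (x + knotA) 0 ≤ 0.905 * max (x + 1) 0 := by
      refine max_le ?_ (by positivity)
      have := le_max_left (x + 1) 0
      linarith
    have h2 : max (x + knotA) 0 ^ 7 ≤ 0.905 ^ 7 * max (x + 1) 0 ^ 7 := by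
      rw [← mul_pow]
      exact pow_le_pow_left₀ (le_max_right _ _) h1 7
    have h3 : (0 : ℝ) ≤ max (x + 1) 0 ^ 7 := by positivity
    norm_num at h2
    linarith
  · rw [max_eq_left (by linarith), max_eq_left (by linarith), max_eq_left (by linarith),
      max_eq_left (by linarith)]
    have m2 := sum_jump_mul_knot_pow_eq_zero (m := 2) (by norm_num)
    have m4 := sum_jump_mul_knot_pow_eq_zero (m := 4) (by norm_num)
    have m6 := sum_jump_mul_knot_pow_eq_zero (m := 6) (by norm_num)
    rw [sum_fin_nine] at m2 m4 m6
    simp only [jump, knot, Matrix.cons_val] at m2 m4 m6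
    have pA := pow_le_pow_left₀ (by linarith) hA.2.le
    have pA' := pow_le_pow_left₀ (by norm_num) hA.1.le
    have pB := pow_le_pow_left₀ (by linarith) hB.2.le
    have pB' := pow_le_pow_left₀ (by norm_num) hB.1.le
    have pC := pow_le_pow_left₀ (by linarith) hC.2.le
    have pC' := pow_le_pow_left₀ (by norm_num) hC.1.le
    have ex : (x + 1) ^ 7 - 2 * (x + knotA) ^ 7 + 2 * (x + knotB) ^ 7 - 2 * (x + knotC) ^ 7 =
        (-x) ^ 7 + (1 - 2 * knotA ^ 7 + 2 * knotB ^ 7 - 2 * knotC ^ 7)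
        + 21 * (1 - 2 * knotA ^ 5 + 2 * knotB ^ 5 - 2 * knotC ^ 5) * x ^ 2
        + 35 * (1 - 2 * knotA ^ 3 + 2 * knotB ^ 3 - 2 * knotC ^ 3) * x ^ 4
        + 7 * (1 - 2 * knotA + 2 * knotB - 2 * knotC) * x ^ 6 := by
      linear_combination (7 / 2 * x) * m6 + 35 / 2 * x ^ 3 * m4 + 21 / 2 * x ^ 5 * m2
    rw [ex]
    have c0 : 0.02 ≤ 1 - 2 * knotA ^ 7 + 2 * knotB ^ 7 - 2 * knotC ^ 7 := by
      have a := pA 7; have b := pB' 7; have c := pC 7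
      norm_num at a b c ⊢
      linarith
    have c2 : -0.0105 ≤ 1 - 2 * knotA ^ 5 + 2 * knotB ^ 5 - 2 * knotC ^ 5 := by
      have a := pA 5; have b := pB' 5; have c := pC 5
      norm_num at a b c ⊢
      linarith
    have c4 : 0 ≤ 1 - 2 * knotA ^ 3 + 2 * knotB ^ 3 - 2 * knotC ^ 3 := by
      have a := pA 3; have b := pB' 3; have c := pC 3
      norm_num at a b c ⊢
      linarith
    have c6 : -0.2 ≤ 1 - 2 * knotA + 2 * knotB - 2 * knotC := by linarith
    have y2 : x ^ 2 ≤ 0.04 := by nlinarith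
    have y0 : 0 ≤ x ^ 2 := sq_nonneg x
    have y6 : x ^ 6 ≤ 0.04 ^ 3 := by
      rw [show x ^ 6 = (x ^ 2) ^ 3 by ring]; gcongr
    have y6' : 0 ≤ x ^ 6 := by positivity
    have y4' : 0 ≤ x ^ 4 := by positivity
    have y7 : 0 ≤ (-x) ^ 7 := pow_nonneg (by linarith) 7
    have t4 := mul_nonneg c4 y4'
    have t2 := mul_le_mul_of_nonneg_right c2 y0
    have t6 := mul_le_mul_of_nonneg_right c6 y6'
    norm_num at *
    linarith

/-! ### Quadrature -/

lemma sum_Icc_telescope (f : ℝ → ℝ) (K : ℕ) (c : ℝ) :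
    ∑ k ∈ Finset.Icc (-(K : ℤ)) K, (f (k + c + 1) - f (k + c)) = f (K + c + 1) - f (-K + c) := by
  induction K with
  | zero => simp
  | succ K ih =>
    have : Finset.Icc (-((K + 1 : ℕ) : ℤ)) ((K + 1 : ℕ) : ℤ) =
        insert (-((K : ℤ) + 1)) (insert ((K : ℤ) + 1) (Finset.Icc (-(K : ℤ)) K)) := by
      ext k; simp only [Finset.mem_Icc, Finset.mem_insert]; push_cast; omega
    rw [this, Finset.sum_insert, Finset.sum_insert, ih]
    · push_cast
      rw [show -((K : ℝ) + 1) + c + 1 = -K + c by ring, show (K : ℝ) + 1 + c = K + c + 1 by ring]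
      ring
    · simp
    · simp only [Finset.mem_insert, Finset.mem_Icc]; omega

/-- A mean value estimate for a symmetric difference quotient. -/
lemma abs_symm_diff_sub_le {Φ P : ℝ → ℝ} {θ B : ℝ}
    (hΦ : ∀ s, HasDerivAt Φ (P s) s)
    (hP : ∀ s, |s| ≤ 1 / 2 → |P (θ + s) - P θ| ≤ B * |s|) :
    |Φ (θ + 1 / 2) - Φ (θ - 1 / 2) - P θ| ≤ B / 4 := by
  have hd : ∀ s : ℝ, HasDerivAt (fun s => Φ (θ + s) - Φ (θ - s) - 2 * s * P θ)
      (P (θ + s) + P (θ - s) - 2 * P θ) s := by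
    intro s
    have h1 := (hΦ (θ + s)).comp_const_add θ s
    have h2 := (hΦ (θ - s)).comp_const_sub θ s
    have h3 := ((hasDerivAt_id s).const_mul 2).mul_const (P θ)
    refine ((h1.sub h2).sub h3).congr_deriv ?_
    ring
  have hB : ∀ s : ℝ, HasDerivAt (fun s => B * s ^ 2) (2 * B * s) s := by
    intro s
    refine ((hasDerivAt_pow 2 s).const_mul B).congr_deriv ?_
    norm_num; ring
  have key := image_norm_le_of_norm_deriv_right_le_deriv_boundary
    (f := fun s => Φ (θ + s) - Φ (θ - s) - 2 * s * P θ)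
    (f' := fun s => P (θ + s) + P (θ - s) - 2 * P θ) (a := 0) (b := 1 / 2)
    (B := fun s => B * s ^ 2) (B' := fun s => 2 * B * s)
    (fun s _ => (hd s).continuousAt.continuousWithinAt) (fun s _ => (hd s).hasDerivWithinAt)
    (by simp) hB (by
      intro s hs
      have a1 := hP s (by rw [abs_of_nonneg hs.1]; exact hs.2.le)
      have a2 := hP (-s) (by rw [abs_neg, abs_of_nonneg hs.1]; exact hs.2.le)
      rw [abs_neg] at a2
      rw [abs_of_nonneg hs.1] at a1 a2
      rw [← sub_eq_add_neg] at a2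
      rw [Real.norm_eq_abs]
      calc |P (θ + s) + P (θ - s) - 2 * P θ| = |(P (θ + s) - P θ) + (P (θ - s) - P θ)| := by
            congr 1; ring
        _ ≤ _ := abs_add_le _ _
        _ ≤ _ := by linarith)
    (x := 1 / 2) (by norm_num)
  norm_num at key ⊢
  linarith

/-- One step of the quadrature estimate: shifted Riemann sums of `F` are close to the integral if
the shifted Riemann sums of `F'` are bounded. -/
lemma abs_sum_sub_integral_le {G F F' : ℝ → ℝ} {c B T : ℝ} {E K : ℕ} (hE : 0 < E)
    (hG : ∀ x, HasDerivAt G (F x) x) (hF : ∀ x, HasDerivAt F (F' x) x)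
    (hl : ∀ x, x ≤ -1 → G x = 0) (hr : ∀ x, 1 ≤ x → G x = c)
    (hB : ∀ θ : ℝ, |θ| ≤ T + 1 / 2 →
      |∑ k ∈ Finset.Icc (-(K : ℤ)) K, F' ((k + θ) / E)| ≤ B)
    (hK : (E : ℝ) + T ≤ K) {θ : ℝ} (hθ : |θ| ≤ T) :
    |∑ k ∈ Finset.Icc (-(K : ℤ)) K, F ((k + θ) / E) - E * c| ≤ B / E / 4 := by
  have hE' : (0 : ℝ) < E := by exact_mod_cast hE
  have hsum : ∀ A A' : ℝ → ℝ, (∀ x, HasDerivAt A (A' x) x) → ∀ s : ℝ,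
      HasDerivAt (fun θ => ∑ k ∈ Finset.Icc (-(K : ℤ)) K, A ((k + θ) / E))
        ((∑ k ∈ Finset.Icc (-(K : ℤ)) K, A' ((k + s) / E)) / E) s := by
    intro A A' hA s
    rw [Finset.sum_div]
    refine HasDerivAt.fun_sum fun k _ => ?_
    have h1 : HasDerivAt (fun θ : ℝ => ((k : ℝ) + θ) / E) (1 / E) s :=
      ((hasDerivAt_id s).const_add (k : ℝ)).div_const _
    refine ((hA _).comp s h1).congr_deriv ?_
    ring
  set P : ℝ → ℝ := fun θ => ∑ k ∈ Finset.Icc (-(K : ℤ)) K, F ((k + θ) / E) with hPdef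
  set Φ : ℝ → ℝ := fun θ => E * ∑ k ∈ Finset.Icc (-(K : ℤ)) K, G ((k + θ) / E) with hΦdef
  have hΦ : ∀ s, HasDerivAt Φ (P s) s := by
    intro s
    refine ((hsum G F hG s).const_mul (E : ℝ)).congr_deriv ?_
    rw [hPdef]; field_simp
  have hP : ∀ s, |s| ≤ 1 / 2 → |P (θ + s) - P θ| ≤ B / E * |s| := by
    intro s hs
    have := (convex_Icc (θ - 1 / 2) (θ + 1 / 2)).norm_image_sub_le_of_norm_hasDerivWithin_le
      (f := P) (f' := fun θ => (∑ k ∈ Finset.Icc (-(K : ℤ)) K, F' ((k + θ) / E)) / E)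
      (C := B / E) (x := θ) (y := θ + s) (fun y _ => (hsum F F' hF y).hasDerivWithinAt)
      (by
        intro y hy
        rw [Real.norm_eq_abs, abs_div, abs_of_pos hE']
        gcongr
        refine hB y ?_
        rw [abs_le] at hθ ⊢
        constructor <;> linarith [hy.1, hy.2])
      (by constructor <;> linarith) (by rw [abs_le] at hs; constructor <;> linarith)
    simpa using this
  have main := abs_symm_diff_sub_le hΦ hP
  have htel : Φ (θ + 1 / 2) - Φ (θ - 1 / 2) = E * c := by
    have h := sum_Icc_telescope (fun s => G (s / E)) K (θ - 1 / 2)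
    rw [abs_le] at hθ
    rw [hr ((K + (θ - 1 / 2) + 1) / E) (by rw [le_div_iff₀ hE']; linarith),
      hl ((-K + (θ - 1 / 2)) / E) (by rw [div_le_iff₀ hE']; linarith), sub_zero] at h
    rw [hΦdef]
    simp only
    rw [← mul_sub, ← Finset.sum_sub_distrib, ← h]
    congr 1
    refine Finset.sum_congr rfl fun k _ => ?_
    congr 2
    ring
  rw [htel, abs_sub_comm] at main
  exact main

/-- A chain of successive derivatives up to order six with support in `[-1, 1]`. -/
structure IsChain (c : ℕ → ℝ → ℝ) : Prop where
  hasDerivAt : ∀ j < 6, ∀ x, HasDerivAt (c j) (c (j + 1) x) x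
  eq_zero : ∀ j ≤ 6, ∀ x, 1 ≤ |x| → c j x = 0

lemma IsChain.abs_sum_sub_integral_le {c : ℕ → ℝ → ℝ} (hc : IsChain c) {G : ℝ → ℝ} {I B : ℝ}
    (hG : ∀ x, HasDerivAt G (c 0 x) x) (hl : ∀ x, x ≤ -1 → G x = 0) (hr : ∀ x, 1 ≤ x → G x = I)
    (hB : ∀ x, |c 6 x| ≤ B) {N : ℕ} (hN : 20 ≤ N) :
    |∑ k ∈ Finset.Icc (-(N : ℤ)) N, c 0 (k / (N + 1)) - (N + 1) * I| ≤
      (N + 1) * B * (3 / 84 ^ 6) := by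
  set K : ℕ := N + 11 with hK
  set E : ℕ := N + 1 with hE
  have hE21 : (21 : ℝ) ≤ E := by rw [hE]; push_cast; have : (20 : ℝ) ≤ N := by exact_mod_cast hN
                                 linarith
  have hKE : (K : ℝ) = E + 10 := by rw [hK, hE]; push_cast; ring
  have hB0 : 0 ≤ B := (abs_nonneg _).trans (hB 0)
  have hstep : ∀ i : ℕ, i ≤ 5 → ∀ θ : ℝ, |θ| ≤ 1 / 2 + (5 - i) / 2 →
      |∑ k ∈ Finset.Icc (-(K : ℤ)) K, c (6 - i) ((k + θ) / E)| ≤ (2 * K + 1) * B / 84 ^ i := by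
    intro i
    induction i with
    | zero =>
      intro _ θ _
      refine (Finset.abs_sum_le_sum_abs _ _).trans ?_
      refine (Finset.sum_le_card_nsmul _ _ B fun k _ => hB _).trans ?_
      simp only [Int.card_Icc, nsmul_eq_mul]
      have : ((K : ℤ) + 1 - -(K : ℤ)).toNat = 2 * K + 1 := by omega
      rw [this]; push_cast; simp
    | succ i ih =>
      intro hi θ hθ
      push_cast at hθ
      have hs := RotationKernel.abs_sum_sub_integral_le (G := c (5 - i - 1)) (F := c (5 - i))
        (F' := c (6 - i)) (c := 0) (E := E) (K := K) (T := 1 / 2 + (5 - (i + 1)) / 2) (by omega)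
        (fun x => by
          have := hc.hasDerivAt (5 - i - 1) (by omega) x
          rwa [show 5 - i - 1 + 1 = 5 - i by omega] at this)
        (fun x => by
          have := hc.hasDerivAt (5 - i) (by omega) x
          rwa [show 5 - i + 1 = 6 - i by omega] at this)
        (fun x hx => hc.eq_zero _ (by omega) x (by rw [abs_of_nonpos (by linarith)]; linarith))
        (fun x hx => hc.eq_zero _ (by omega) x (by rw [abs_of_nonneg (by linarith)]; linarith))
        (fun θ hθ => ih (by omega) θ (by linarith))
        (by rw [hKE]; have : (0 : ℝ) ≤ i := by positivity
            linarith) hθ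
      rw [mul_zero, sub_zero] at hs
      rw [show 6 - (i + 1) = 5 - i by omega]
      refine hs.trans ?_
      rw [pow_succ, ← div_div, div_div _ (E : ℝ)]
      gcongr
      linarith
  have hfin := RotationKernel.abs_sum_sub_integral_le (G := G) (F := c 0) (F' := c 1) (c := I)
    (E := E) (K := K) (T := 0) (θ := 0) (by omega) hG (hc.hasDerivAt 0 (by norm_num)) hl hr
    (fun θ hθ => hstep 5 le_rfl θ (by norm_num; linarith)) (by rw [hKE]; linarith) (by simp)
  have hsub : ∑ k ∈ Finset.Icc (-(N : ℤ)) N, c 0 (k / (N + 1)) =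
      ∑ k ∈ Finset.Icc (-(K : ℤ)) K, c 0 ((k + (0 : ℝ)) / E) := by
    have e : ∀ k : ℤ, c 0 ((k + (0 : ℝ)) / E) = c 0 (k / (N + 1)) := by
      intro k; rw [add_zero, hE]; push_cast; rfl
    simp_rw [e]
    refine Finset.sum_subset (Finset.Icc_subset_Icc (by omega) (by omega)) fun k _ hk => ?_
    refine hc.eq_zero 0 (by norm_num) _ ?_
    have hk' : (N : ℤ) + 1 ≤ |k| := by
      simp only [Finset.mem_Icc, not_and_or, not_le] at hk
      rw [le_abs]; omega
    rw [abs_div, abs_of_pos (show (0 : ℝ) < N + 1 by positivity), le_div_iff₀ (by positivity)]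
    rw [one_mul]; exact_mod_cast hk'
  have hcast : ((N : ℝ) + 1) = E := by rw [hE]; push_cast; rfl
  rw [hsub, hcast]
  refine hfin.trans ?_
  have h3 : (2 * (K : ℝ) + 1) ≤ 3 * E := by rw [hKE]; linarith
  calc (2 * (K : ℝ) + 1) * B / 84 ^ 5 / E / 4 = (2 * (K : ℝ) + 1) * B / 84 ^ 5 / (E * 4) := by
        rw [div_div _ (E : ℝ)]
    _ ≤ 3 * E * B / 84 ^ 5 / (21 * 4) := by gcongr
    _ = _ := by ring

/-- multiplication of a chain by the variable -/
def mulVar (c : ℕ → ℝ → ℝ) (j : ℕ) (x : ℝ) : ℝ := x * c j x + j * c (j - 1) x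

lemma IsChain.mulVar {c : ℕ → ℝ → ℝ} (hc : IsChain c) : IsChain (mulVar c) where
  hasDerivAt j hj x := by
    have h1 := (hasDerivAt_id x).mul (hc.hasDerivAt j hj x)
    rcases j with _ | j
    · have e : RotationKernel.mulVar c 0 = fun x => x * c 0 x := by
        ext y; simp [RotationKernel.mulVar]
      rw [e]
      refine h1.congr_deriv ?_
      simp [RotationKernel.mulVar]; ring
    · have h2 := (hc.hasDerivAt j (by omega) x).const_mul ((j + 1 : ℕ) : ℝ)
      refine (h1.add h2).congr_deriv ?_
      simp [RotationKernel.mulVar]; ring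
  eq_zero j hj x hx := by
    rw [RotationKernel.mulVar, hc.eq_zero j hj x hx, hc.eq_zero (j - 1) (by omega) x hx]; ring

lemma abs_mulVar_le {c : ℕ → ℝ → ℝ} (hc : IsChain c) {b : ℕ → ℝ}
    (hb : ∀ j ≤ 6, ∀ x, |c j x| ≤ b j) {j : ℕ} (hj : j ≤ 6) (x : ℝ) :
    |mulVar c j x| ≤ b j + j * b (j - 1) := by
  have b1 := hb j hj x
  have b2 := hb (j - 1) (by omega) x
  by_cases hx : 1 ≤ |x|
  · rw [hc.mulVar.eq_zero j hj x hx, abs_zero]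
    have := (abs_nonneg _).trans b1
    have := (abs_nonneg _).trans b2
    positivity
  · push Not at hx
    rw [mulVar]
    refine (abs_add_le _ _).trans ?_
    rw [abs_mul, abs_mul, Nat.abs_cast]
    refine add_le_add ?_ (by gcongr)
    nlinarith [abs_nonneg x, abs_nonneg (c j x)]

/-- the derivatives of the perfect B-spline of order seven -/
noncomputable def splineChain (j : ℕ) : ℝ → ℝ := spl 0 (7 - j)

lemma isChain_splineChain : IsChain splineChain where
  hasDerivAt j hj x := by
    have := hasDerivAt_spl 0 (5 - j) x
    rwa [show 5 - j + 2 = 7 - j by omega, show 5 - j + 1 = 7 - (j + 1) by omega] at this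
  eq_zero j hj x hx := by
    rcases le_abs.1 hx with h | h
    · exact spl_of_one_le (by omega) h
    · have := spl_succ_of_le 0 (6 - j) (show x ≤ -1 by linarith)
      rwa [show 6 - j + 1 = 7 - j by omega] at this

lemma abs_splineChain_le : ∀ j ≤ 6, ∀ x, |splineChain j x| ≤ 1 / 4 := by
  intro j hj x
  have := abs_spl_succ_le (k := 6 - j) (by omega) x
  rwa [show 6 - j + 1 = 7 - j by omega] at this

/-! ### Moments of the sampled spline -/

lemma spl_eq_of_one_le (k : ℕ) {x : ℝ} (hx : 1 ≤ x) :
    spl 0 k x = (∑ j, jump j * (x - knot j) ^ k) / k.factorial := by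
  rw [spl, Finset.sum_div]
  refine Finset.sum_congr rfl fun j _ => ?_
  have := (abs_le.1 (abs_knot_le_one j)).2
  rw [posPow_of_nonneg _ (by linarith)]
  ring

lemma sum_jump_mul_sub_knot_pow_eq (k : ℕ) (x : ℝ) :
    ∑ j, jump j * (x - knot j) ^ k =
      ∑ i ∈ Finset.range (k + 1), (-1) ^ i * (k.choose i) * x ^ (k - i) *
        ∑ j, jump j * knot j ^ i := by
  simp_rw [Finset.mul_sum]
  rw [Finset.sum_comm]
  refine Finset.sum_congr rfl fun j _ => ?_
  rw [sub_eq_add_neg, add_comm, add_pow, Finset.mul_sum]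
  refine Finset.sum_congr rfl fun i _ => ?_
  rw [neg_pow]
  ring

lemma spl_values_of_one_le {x : ℝ} (hx : 1 ≤ x) :
    spl 0 8 x = 1 / 322560 ∧ spl 0 9 x = x / 322560 ∧
    spl 0 10 x = (45 * x ^ 2 / 8 + 5 / 16) / 3628800 ∧
    spl 0 11 x = (165 * x ^ 3 / 8 + 55 / 16 * x) / 39916800 ∧
    spl 0 12 x = (495 / 8 * x ^ 4 + 330 / 16 * x ^ 2 + 33 / 64) / 479001600 := by
  have h0 : ∀ m ≤ 7, ∑ j, jump j * knot j ^ m = 0 := fun m hm => sum_jump_mul_knot_pow_eq_zero hm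
  have h8 := sum_jump_mul_knot_pow_eight
  have h9 := sum_jump_mul_knot_pow_odd 4
  have h10 := sum_jump_mul_knot_pow_ten
  have h11 := sum_jump_mul_knot_pow_odd 5
  have h12 := sum_jump_mul_knot_pow_twelve
  norm_num at h9 h11
  refine ⟨?_, ?_, ?_, ?_, ?_⟩ <;>
  · rw [spl_eq_of_one_le _ hx, sum_jump_mul_sub_knot_pow_eq]
    simp only [Finset.sum_range_succ _ 12, Finset.sum_range_succ _ 11, Finset.sum_range_succ _ 10,
      Finset.sum_range_succ _ 9, Finset.sum_range_succ _ 8]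
    rw [Finset.sum_eq_zero (fun i hi => by
      rw [h0 i (by have := Finset.mem_range.1 hi; omega), mul_zero])]
    simp only [h8, h9, h10, h11, h12]
    norm_num [Nat.choose, Nat.factorial]
    try ring

/-- the samples of the spline -/
noncomputable def sample (N : ℕ) (k : ℤ) : ℝ := spl 0 7 (k / (N + 1))

lemma abs_sum_sample_sub_le {N : ℕ} (hN : 20 ≤ N) :
    |∑ k ∈ Finset.Icc (-(N : ℤ)) N, sample N k - (N + 1) * (1 / 322560)| ≤
      (N + 1) * (1 / 4) * (3 / 84 ^ 6) := by
  refine isChain_splineChain.abs_sum_sub_integral_le (G := spl 0 8) (hasDerivAt_spl 0 6)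
    (fun x hx => spl_succ_of_le 0 7 hx) (fun x hx => (spl_values_of_one_le hx).1)
    (abs_splineChain_le 6 le_rfl) hN

lemma abs_sum_sq_mul_sample_sub_le {N : ℕ} (hN : 20 ≤ N) :
    |(∑ k ∈ Finset.Icc (-(N : ℤ)) N, ((k : ℝ) / (N + 1)) ^ 2 * sample N k : ℝ) -
      (N + 1) * (1 / 322560 / 18)| ≤ (N + 1) * (43 / 4) * (3 / 84 ^ 6) := by
  have c1 := isChain_splineChain.mulVar
  have c2 := c1.mulVar
  have e : ∀ x, mulVar (mulVar splineChain) 0 x = x ^ 2 * spl 0 7 x := by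
    intro x; simp [mulVar, splineChain]; ring
  have := c2.abs_sum_sub_integral_le
    (G := fun x => x ^ 2 * spl 0 8 x - 2 * x * spl 0 9 x + 2 * spl 0 10 x)
    (I := 1 / 322560 / 18) (B := 43 / 4) ?_ ?_ ?_ ?_ hN
  · simpa only [e, sample] using this
  · intro x
    rw [e]
    have d1 := (hasDerivAt_pow 2 x).mul (hasDerivAt_spl 0 6 x)
    have d2 := ((hasDerivAt_id x).const_mul 2).mul (hasDerivAt_spl 0 7 x)
    have d3 := (hasDerivAt_spl 0 8 x).const_mul 2
    refine ((d1.sub d2).add d3).congr_deriv ?_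
    norm_num
    ring
  · intro x hx
    rw [spl_succ_of_le 0 7 hx, spl_succ_of_le 0 8 hx, spl_succ_of_le 0 9 hx]; ring
  · intro x hx
    obtain ⟨h8, h9, h10, -⟩ := spl_values_of_one_le hx
    rw [h8, h9, h10]; ring
  · intro x
    refine (abs_mulVar_le c1 (fun j hj x => abs_mulVar_le isChain_splineChain
      (b := fun _ => 1 / 4) abs_splineChain_le hj x) (j := 6) le_rfl x).trans ?_
    norm_num

lemma abs_sum_four_mul_sample_sub_le {N : ℕ} (hN : 20 ≤ N) :
    |(∑ k ∈ Finset.Icc (-(N : ℤ)) N, ((k : ℝ) / (N + 1)) ^ 4 * sample N k : ℝ) -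
      (N + 1) * (1 / 322560 / 120)| ≤ (N + 1) * (1045 / 4) * (3 / 84 ^ 6) := by
  have c1 := isChain_splineChain.mulVar
  have c2 := c1.mulVar
  have c3 := c2.mulVar
  have c4 := c3.mulVar
  have e : ∀ x, mulVar (mulVar (mulVar (mulVar splineChain))) 0 x = x ^ 4 * spl 0 7 x := by
    intro x; simp [mulVar, splineChain]; ring
  have := c4.abs_sum_sub_integral_le
    (G := fun x => x ^ 4 * spl 0 8 x - 4 * x ^ 3 * spl 0 9 x + 12 * x ^ 2 * spl 0 10 x
      - 24 * x * spl 0 11 x + 24 * spl 0 12 x)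
    (I := 1 / 322560 / 120) (B := 1045 / 4) ?_ ?_ ?_ ?_ hN
  · simpa only [e, sample] using this
  · intro x
    rw [e]
    have d1 := (hasDerivAt_pow 4 x).mul (hasDerivAt_spl 0 6 x)
    have d2 := ((hasDerivAt_pow 3 x).const_mul 4).mul (hasDerivAt_spl 0 7 x)
    have d3 := ((hasDerivAt_pow 2 x).const_mul 12).mul (hasDerivAt_spl 0 8 x)
    have d4 := ((hasDerivAt_id x).const_mul 24).mul (hasDerivAt_spl 0 9 x)
    have d5 := (hasDerivAt_spl 0 10 x).const_mul 24
    refine ((((d1.sub d2).add d3).sub d4).add d5).congr_deriv ?_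
    norm_num
    ring
  · intro x hx
    rw [spl_succ_of_le 0 7 hx, spl_succ_of_le 0 8 hx, spl_succ_of_le 0 9 hx,
      spl_succ_of_le 0 10 hx, spl_succ_of_le 0 11 hx]; ring
  · intro x hx
    obtain ⟨h8, h9, h10, h11, h12⟩ := spl_values_of_one_le hx
    rw [h8, h9, h10, h11, h12]; ring
  · intro x
    refine (abs_mulVar_le c3 (fun j hj x => abs_mulVar_le c2 (fun j hj x => abs_mulVar_le c1
      (fun j hj x => abs_mulVar_le isChain_splineChain
      (b := fun _ => 1 / 4) abs_splineChain_le hj x) hj x) hj x) (j := 6) le_rfl x).trans ?_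
    norm_num

/-! ### Variation of iterated differences -/

/-- The sums of absolute values of the `m`-th differences with step `h` are bounded by `C`. -/
def DiffBound (h : ℝ) (f : ℝ → ℝ) (m : ℕ) (C : ℝ) : Prop :=
  ∀ (x : ℝ) (s : Finset ℤ), ∑ k ∈ s, |(fwdDiff h)^[m] f (x + k * h)| ≤ C

lemma DiffBound.add {h C C' : ℝ} {f g : ℝ → ℝ} {m : ℕ} (hf : DiffBound h f m C)
    (hg : DiffBound h g m C') : DiffBound h (f + g) m (C + C') := by
  intro x s
  rw [fwdDiff_iter_add]
  calc _ ≤ ∑ k ∈ s, (|(fwdDiff h)^[m] f (x + k * h)| + |(fwdDiff h)^[m] g (x + k * h)|) :=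
        Finset.sum_le_sum fun k _ => abs_add_le _ _
    _ ≤ _ := by rw [Finset.sum_add_distrib]; exact add_le_add (hf x s) (hg x s)

lemma DiffBound.const_mul {h C : ℝ} {f : ℝ → ℝ} {m : ℕ} (hf : DiffBound h f m C) (a : ℝ) :
    DiffBound h (fun x => a * f x) m (|a| * C) := by
  intro x s
  have e : (fun x => a * f x) = a • f := rfl
  rw [e, fwdDiff_iter_const_smul]
  simp only [Pi.smul_apply, smul_eq_mul, abs_mul, ← Finset.mul_sum]
  gcongr
  exact hf x s

lemma DiffBound.sum {ι : Type*} {h : ℝ} {f : ι → ℝ → ℝ} {C : ι → ℝ} {m : ℕ} (t : Finset ι)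
    (hf : ∀ i ∈ t, DiffBound h (f i) m (C i)) : DiffBound h (∑ i ∈ t, f i) m (∑ i ∈ t, C i) := by
  classical
  induction t using Finset.induction_on with
  | empty =>
    intro x s
    have : (fwdDiff h)^[m] (0 : ℝ → ℝ) = 0 := by
      have := fwdDiff_iter_const_smul (h := h) (0 : ℝ) (0 : ℝ → ℝ) m
      simpa using this
    simp [this]
  | insert i t hi ih =>
    rw [Finset.sum_insert hi, Finset.sum_insert hi]
    exact (hf i (Finset.mem_insert_self i t)).add
      (ih fun j hj => hf j (Finset.mem_insert_of_mem hj))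

lemma intervalIntegrable_fwdDiff_iter {f : ℝ → ℝ}
    (hf : ∀ a b, IntervalIntegrable f MeasureTheory.volume a b) (h : ℝ) (m : ℕ) (a b : ℝ) :
    IntervalIntegrable ((fwdDiff h)^[m] f) MeasureTheory.volume a b := by
  induction m generalizing a b with
  | zero => exact hf a b
  | succ m ih =>
    rw [Function.iterate_succ_apply']
    have h1 := (ih (a + h) (b + h)).comp_add_right h
    simp only [add_sub_cancel_right] at h1
    exact h1.sub (ih a b)

lemma fwdDiff_iter_succ_eq_integral {f F : ℝ → ℝ} {h : ℝ}
    (hf : ∀ a b, IntervalIntegrable f MeasureTheory.volume a b)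
    (hF : ∀ y, F (y + h) - F y = ∫ u in (0 : ℝ)..h, f (y + u)) (m : ℕ) (y : ℝ) :
    (fwdDiff h)^[m + 1] F y = ∫ u in (0 : ℝ)..h, (fwdDiff h)^[m] f (y + u) := by
  induction m generalizing y with
  | zero => simpa [fwdDiff] using hF y
  | succ m ih =>
    rw [Function.iterate_succ_apply', fwdDiff, ih, ih, ← intervalIntegral.integral_sub]
    · refine intervalIntegral.integral_congr fun u _ => ?_
      simp only [Function.iterate_succ_apply', fwdDiff]
      rw [add_right_comm]
    · have := (intervalIntegrable_fwdDiff_iter hf h m (y + h) (y + h + h)).comp_add_left (y + h)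
      simpa using this
    · have := (intervalIntegrable_fwdDiff_iter hf h m y (y + h)).comp_add_left y
      simpa using this

lemma DiffBound.integral {f F : ℝ → ℝ} {h C : ℝ} {m : ℕ} (hh : 0 ≤ h) (hfm : DiffBound h f m C)
    (hf : ∀ a b, IntervalIntegrable f MeasureTheory.volume a b)
    (hF : ∀ y, F (y + h) - F y = ∫ u in (0 : ℝ)..h, f (y + u)) :
    DiffBound h F (m + 1) (h * C) := by
  intro x s
  have hii : ∀ y, IntervalIntegrable (fun u => (fwdDiff h)^[m] f (y + u)) MeasureTheory.volume 0 h := by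
    intro y
    have := (intervalIntegrable_fwdDiff_iter hf h m y (y + h)).comp_add_left y
    simpa using this
  calc ∑ k ∈ s, |(fwdDiff h)^[m + 1] F (x + k * h)|
      ≤ ∑ k ∈ s, ∫ u in (0 : ℝ)..h, |(fwdDiff h)^[m] f (x + k * h + u)| := by
        refine Finset.sum_le_sum fun k _ => ?_
        rw [fwdDiff_iter_succ_eq_integral hf hF]
        exact intervalIntegral.abs_integral_le_integral_abs hh
    _ = ∫ u in (0 : ℝ)..h, ∑ k ∈ s, |(fwdDiff h)^[m] f (x + k * h + u)| := by
        rw [intervalIntegral.integral_finsetSum fun k _ => (hii _).abs]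
    _ ≤ ∫ _u in (0 : ℝ)..h, C := by
        refine intervalIntegral.integral_mono_on hh ?_ (by simp) fun u _ => ?_
        · have := IntervalIntegrable.sum s fun k (_ : k ∈ s) => (hii (x + k * h)).abs
          have e : (∑ k ∈ s, fun u => |(fwdDiff h)^[m] f (x + k * h + u)|) =
              fun u => ∑ k ∈ s, |(fwdDiff h)^[m] f (x + k * h + u)| := by
            ext u; simp
          rwa [← e]
        · have := hfm (x + u) s
          simpa only [add_right_comm] using this
    _ = h * C := by simp

lemma diffBound_spl_add {h C : ℝ} (hh : 0 ≤ h) {l k m : ℕ} (hb : DiffBound h (spl l k) m C)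
    (n : ℕ) : DiffBound h (spl l (k + n)) (m + n) (h ^ n * C) := by
  induction n with
  | zero => simpa using hb
  | succ n ih =>
    have := ih.integral (F := spl l (k + n + 1)) hh (intervalIntegrable_spl l (k + n)) (by
      intro y
      have e := integral_spl l (k + n) y (y + h)
      rw [← e, intervalIntegral.integral_comp_add_left (fun u => spl l (k + n) u), add_zero])
    rw [pow_succ', mul_assoc]
    exact this

lemma posPow_zero_mono {u v : ℝ} (h : u ≤ v) : posPow 0 u ≤ posPow 0 v := by
  unfold posPow
  split_ifs <;> norm_num
  linarith

lemma diffBound_posPow_zero {h : ℝ} (hh : 0 ≤ h) (t : ℝ) :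
    DiffBound h (fun x => posPow 0 (x - t)) 1 1 := by
  intro x s
  obtain ⟨K, hK⟩ : ∃ K : ℕ, s ⊆ Finset.Icc (-(K : ℤ)) K := by
    refine ⟨∑ k ∈ s, k.natAbs, fun k hk => ?_⟩
    have := Finset.single_le_sum (f := fun k : ℤ => k.natAbs) (fun _ _ => Nat.zero_le _) hk
    rw [Finset.mem_Icc]; omega
  have tel := sum_Icc_telescope (fun y => posPow 0 (x + y * h - t)) K 0
  calc _ ≤ ∑ k ∈ Finset.Icc (-(K : ℤ)) K,
        |(fwdDiff h)^[1] (fun x => posPow 0 (x - t)) (x + k * h)| :=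
        Finset.sum_le_sum_of_subset_of_nonneg hK fun _ _ _ => abs_nonneg _
    _ = ∑ k ∈ Finset.Icc (-(K : ℤ)) K, (posPow 0 (x + (k + 0 + 1) * h - t) -
          posPow 0 (x + (k + 0) * h - t)) := by
        refine Finset.sum_congr rfl fun k _ => ?_
        simp only [Function.iterate_one, fwdDiff]
        rw [abs_of_nonneg (sub_nonneg.2 (posPow_zero_mono (by linarith)))]
        congr 2 <;> ring
    _ ≤ 1 := by
        rw [tel]
        have : ∀ u, 0 ≤ posPow 0 u ∧ posPow 0 u ≤ 1 := by
          intro u; unfold posPow; split_ifs <;> simp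
        linarith [(this (x + (↑K + 0 + 1) * h - t)).2, (this (x + (-↑K + 0) * h - t)).1]

lemma diffBound_spl_zero {h : ℝ} (hh : 0 ≤ h) (l : ℕ) : DiffBound h (spl l 0) 1 16 := by
  have := DiffBound.sum (h := h) (m := 1) Finset.univ fun j (_ : j ∈ Finset.univ) =>
    (diffBound_posPow_zero hh (knot j)).const_mul (jump j * knot j ^ l)
  have e : (∑ j, fun x => jump j * knot j ^ l * posPow 0 (x - knot j)) = spl l 0 := by
    ext x; simp [spl]
  rw [e] at this
  intro x s
  refine (this x s).trans ?_
  rw [← sum_abs_jump]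
  refine Finset.sum_le_sum fun j _ => ?_
  rw [mul_one, abs_mul, abs_pow]
  exact mul_le_of_le_one_right (abs_nonneg _) (pow_le_one₀ (abs_nonneg _) (abs_knot_le_one j))

lemma diffBound_of_support {f : ℝ → ℝ} {C : ℝ} {E : ℕ} (hE : 0 < E) (hC : ∀ x, |f x| ≤ C)
    (hl : ∀ x, x < -1 → f x = 0) (hr : ∀ x, 1 ≤ x → f x = 0) :
    DiffBound (1 / E) f 0 (2 * E * C) := by
  have hE' : (0 : ℝ) < E := by exact_mod_cast hE
  intro x s
  simp only [Function.iterate_zero, id]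
  set a : ℤ := ⌈-(E : ℝ) - x * E⌉ with ha
  have hsub : ∀ k ∈ s, k ∉ Finset.Ico a (a + 2 * E) → |f (x + k * (1 / E))| = 0 := by
    intro k _ hk
    rw [abs_eq_zero]
    rw [Finset.mem_Ico, not_and_or, not_le, not_lt] at hk
    rcases hk with hk | hk
    · apply hl
      rw [ha, Int.lt_ceil] at hk
      have : x + k * (1 / E) = (x * E + k) / E := by field_simp
      rw [this, div_lt_iff₀ hE']; linarith
    · apply hr
      have h1 : (a : ℝ) + 2 * E ≤ k := by exact_mod_cast hk
      have h2 := Int.le_ceil (-(E : ℝ) - x * E)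
      rw [← ha] at h2
      have : x + k * (1 / E) = (x * E + k) / E := by field_simp
      rw [this, le_div_iff₀ hE']; linarith
  have hC0 : 0 ≤ C := (abs_nonneg _).trans (hC 0)
  calc ∑ k ∈ s, |f (x + k * (1 / E))|
      = ∑ k ∈ s with k ∈ Finset.Ico a (a + 2 * E), |f (x + k * (1 / E))| := by
        rw [Finset.sum_filter]
        refine Finset.sum_congr rfl fun k hk => ?_
        split_ifs with h
        · rfl
        · exact hsub k hk h
    _ ≤ (s.filter (· ∈ Finset.Ico a (a + 2 * E))).card • C :=
        Finset.sum_le_card_nsmul _ _ _ fun k _ => hC _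
    _ ≤ (2 * E : ℕ) • C := by
        refine nsmul_le_nsmul_left hC0 ?_
        have : (s.filter (· ∈ Finset.Ico a (a + 2 * E))).card ≤ (Finset.Ico a (a + 2 * E)).card :=
          Finset.card_le_card fun k hk => (Finset.mem_filter.1 hk).2
        refine this.trans ?_
        rw [Int.card_Ico]; omega
    _ = _ := by rw [nsmul_eq_mul]; push_cast; ring

lemma mul_spl (l k : ℕ) (x : ℝ) :
    x * spl l k x = (k + 1) * spl l (k + 1) x + spl (l + 1) k x := by
  simp only [spl, Finset.mul_sum]
  rw [← Finset.sum_add_distrib]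
  refine Finset.sum_congr rfl fun j _ => ?_
  rw [posPow_succ, Nat.factorial_succ, pow_succ]
  push_cast
  field_simp
  ring

/-- Eighth differences of the spline times the monomials of degree at most two. -/
lemma diffBound_pow_mul_spl {E : ℕ} (hE : 0 < E) :
    DiffBound (1 / E) (spl 0 7) 8 (16 * (1 / E) ^ 7) ∧
    DiffBound (1 / E) (fun x => x * spl 0 7 x) 8 (32 * (1 / E) ^ 7) ∧
    DiffBound (1 / E) (fun x => x ^ 2 * spl 0 7 x) 8 (84 * (1 / E) ^ 7) := by
  have hE' : (0 : ℝ) < E := by exact_mod_cast hE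
  set h : ℝ := 1 / E with hh
  have h0 : 0 ≤ h := by positivity
  have hEh : (E : ℝ) * h = 1 := by rw [hh]; field_simp
  have b7 : ∀ l, DiffBound h (spl l 7) 8 (h ^ 7 * 16) := fun l => by
    have := diffBound_spl_add h0 (diffBound_spl_zero h0 l) 7
    simpa using this
  have u0 : DiffBound h (spl 0 8) 8 (h ^ 8 * (2 * E * 1)) := by
    have := diffBound_spl_add h0 (diffBound_of_support hE (f := spl 0 0) (C := 1)
      (fun x => (spl_zero_bounds x).1) (fun x hx => spl_of_lt _ _ hx)
      (fun x hx => spl_of_one_le (by norm_num) hx)) 8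
    simpa using this
  have u1 : DiffBound h (spl 1 8) 8 (h ^ 8 * (2 * E * 1)) := by
    have := diffBound_spl_add h0 (diffBound_of_support hE (f := spl 1 0) (C := 1)
      (fun x => (spl_zero_bounds x).2.1) (fun x hx => spl_of_lt _ _ hx)
      (fun x hx => spl_of_one_le (by norm_num) hx)) 8
    simpa using this
  have u2 : DiffBound h (spl 0 9) 8 (h ^ 8 * (2 * E * (1 / 4))) := by
    have := diffBound_spl_add h0 (diffBound_of_support hE (f := spl 0 1) (C := 1 / 4)
      (fun x => (spl_zero_bounds x).2.2) (fun x hx => spl_of_lt _ _ hx)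
      (fun x hx => spl_of_one_le (by norm_num) hx)) 8
    simpa using this
  have e1 : (fun x => x * spl 0 7 x) = (fun x => 8 * spl 0 8 x) + spl 1 7 := by
    ext x
    simp only [Pi.add_apply]
    rw [mul_spl]; norm_num
  have e2 : (fun x => x ^ 2 * spl 0 7 x) =
      (fun x => 72 * spl 0 9 x) + (fun x => 16 * spl 1 8 x) + spl 2 7 := by
    ext x
    simp only [Pi.add_apply]
    rw [pow_two, mul_assoc, mul_spl, mul_add, mul_left_comm, mul_spl 0 8, mul_spl 1 7]; norm_num
    ring
  refine ⟨?_, ?_, ?_⟩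
  · simpa [mul_comm] using b7 0
  · rw [e1]
    convert (u0.const_mul 8).add (b7 1) using 1
    rw [abs_of_pos (by norm_num)]
    linear_combination (-16 * h ^ 7) * hEh
  · rw [e2]
    convert ((u2.const_mul 72).add (u1.const_mul 16)).add (b7 2) using 1
    rw [abs_of_pos (by norm_num), abs_of_pos (by norm_num)]
    linear_combination (-68 * h ^ 7) * hEh

/-! ### Summation by parts -/

lemma tsum_fwdDiff_mul_zpow {a : ℤ → ℂ} (ha : (Function.support a).Finite) {z : ℂ} (hz : z ≠ 0) :
    ∑' k : ℤ, (a (k + 1) - a k) * z ^ k = (z⁻¹ - 1) * ∑' k : ℤ, a k * z ^ k := by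
  have h0 : Summable fun k : ℤ => a k * z ^ k :=
    summable_of_hasFiniteSupport (ha.subset fun k hk => left_ne_zero_of_mul hk)
  have e : ∀ k : ℤ, a (k + 1) * z ^ k = z⁻¹ * (a (k + 1) * z ^ (k + 1)) := by
    intro k; rw [zpow_add_one₀ hz]; field_simp
  have h1 : Summable fun k : ℤ => a (k + 1) * z ^ (k + 1) :=
    ((Equiv.addRight (1 : ℤ)).summable_iff (f := fun k : ℤ => a k * z ^ k)).2 h0
  have h2 : ∑' k : ℤ, a (k + 1) * z ^ (k + 1) = ∑' k : ℤ, a k * z ^ k :=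
    (Equiv.addRight (1 : ℤ)).tsum_eq (fun k : ℤ => a k * z ^ k)
  simp_rw [sub_mul, e]
  rw [(h1.mul_left _).tsum_sub h0, tsum_mul_left, h2]
  ring

lemma finite_support_fwdDiff_iter {F : ℝ → ℝ} {E : ℕ} (hE : 0 < E)
    (hF : ∀ x, 1 ≤ |x| → F x = 0) (n : ℕ) :
    (Function.support fun k : ℤ => (((fwdDiff (1 / (E : ℝ)))^[n] F (k / E) : ℝ) : ℂ)).Finite := by
  have hE' : (0 : ℝ) < E := by exact_mod_cast hE
  induction n with
  | zero =>
    refine (Set.finite_Icc (-(E : ℤ)) E).subset fun k hk => ?_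
    by_contra hout
    refine hk ?_
    simp only [Function.iterate_zero, id, Complex.ofReal_eq_zero]
    refine hF _ ?_
    rw [abs_div, abs_of_pos hE', le_div_iff₀ hE', one_mul]
    have : (E : ℤ) ≤ |k| := by
      simp only [Set.mem_Icc, not_and_or, not_le] at hout
      rw [le_abs]; omega
    exact_mod_cast this
  | succ n ih =>
    have ih' := ih.preimage (f := fun k : ℤ => k + 1) (by intro a _ b _ h; simpa using h)
    refine (ih'.union ih).subset fun k hk => ?_
    by_contra hout
    simp only [Set.mem_union, Set.mem_preimage, Function.mem_support, not_or, not_not,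
      Complex.ofReal_eq_zero] at hout
    refine hk ?_
    simp only [Function.iterate_succ_apply', fwdDiff]
    rw [show (k : ℝ) / E + 1 / E = ((k + 1 : ℤ) : ℝ) / E by push_cast; ring, hout.1, hout.2]
    simp

lemma norm_exp_sum_le {F : ℝ → ℝ} {C : ℝ} {N n : ℕ} (hF : ∀ x, 1 ≤ |x| → F x = 0)
    (hC : DiffBound (1 / ((N + 1 : ℕ) : ℝ)) F n C) (t : ℝ) :
    (2 * |Real.sin (t / 2)|) ^ n * ‖∑ k ∈ Finset.Icc (-(N : ℤ)) N,
      (F (k / (N + 1)) : ℂ) * Complex.exp (k * t * Complex.I)‖ ≤ C := by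
  set E : ℕ := N + 1 with hE
  have hE0 : 0 < E := by omega
  set z : ℂ := Complex.exp (t * Complex.I) with hz
  have hz0 : z ≠ 0 := Complex.exp_ne_zero _
  have hzn : ‖z‖ = 1 := Complex.norm_exp_ofReal_mul_I t
  set b : ℕ → ℤ → ℂ := fun m k => (((fwdDiff (1 / (E : ℝ)))^[m] F (k / E) : ℝ) : ℂ) with hb
  have hsupp : ∀ m, (Function.support (b m)).Finite := finite_support_fwdDiff_iter hE0 hF
  have hstep : ∀ m k, b (m + 1) k = b m (k + 1) - b m k := by
    intro m k
    simp only [hb, Function.iterate_succ_apply', fwdDiff]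
    rw [show (k : ℝ) / E + 1 / E = ((k + 1 : ℤ) : ℝ) / E by push_cast; ring]
    push_cast; rfl
  have hiter : ∀ m, ∑' k : ℤ, b m k * z ^ k = (z⁻¹ - 1) ^ m * ∑' k : ℤ, b 0 k * z ^ k := by
    intro m
    induction m with
    | zero => simp
    | succ m ih =>
      simp_rw [hstep m]
      rw [tsum_fwdDiff_mul_zpow (hsupp m) hz0, ih, pow_succ']
      ring
  have hsum : ∑ k ∈ Finset.Icc (-(N : ℤ)) N,
      (F (k / (N + 1)) : ℂ) * Complex.exp (k * t * Complex.I) = ∑' k : ℤ, b 0 k * z ^ k := by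
    rw [tsum_eq_sum (s := Finset.Icc (-(N : ℤ)) N)]
    · refine Finset.sum_congr rfl fun k _ => ?_
      rw [hz, ← Complex.exp_int_mul, mul_assoc]
      simp [hb, hE]
    · intro k hk
      have hk' : (E : ℤ) ≤ |k| := by
        simp only [Finset.mem_Icc, not_and_or, not_le] at hk
        rw [le_abs]; omega
      have h0 : F ((k : ℝ) / E) = 0 := by
        refine hF _ ?_
        rw [abs_div, Nat.abs_cast, le_div_iff₀ (by exact_mod_cast hE0), one_mul]
        exact_mod_cast hk'
      simp [hb, h0]
  have hnorm : ‖z⁻¹ - 1‖ = 2 * |Real.sin (t / 2)| := by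
    have e : z⁻¹ = Complex.exp (Complex.I * ((-t : ℝ) : ℂ)) := by
      rw [hz, ← Complex.exp_neg]; push_cast; ring_nf
    rw [e, Complex.norm_exp_I_mul_ofReal_sub_one, Real.norm_eq_abs, abs_mul, neg_div, Real.sin_neg,
      abs_neg]
    norm_num
  rw [hsum, ← hnorm, ← norm_pow, ← norm_mul, ← hiter n]
  have hs : Summable fun k : ℤ => ‖b n k * z ^ k‖ :=
    summable_of_hasFiniteSupport ((hsupp n).subset fun k hk => by
      rw [Function.mem_support] at hk ⊢
      intro h0; exact hk (by rw [h0]; simp))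
  refine (norm_tsum_le_tsum_norm hs).trans (hs.tsum_le_of_sum_le fun s => ?_)
  have h1 := hC 0 s
  refine le_trans (le_of_eq (Finset.sum_congr rfl fun k _ => ?_)) h1
  rw [norm_mul, norm_zpow, hzn, one_zpow, mul_one, hb]
  simp only [Complex.norm_real, Real.norm_eq_abs]
  rw [zero_add, mul_one_div]

section

/-! ### The trigonometric kernel and its derivatives -/

lemma cos_le_quartic (x : ℝ) : Real.cos x ≤ 1 - x ^ 2 / 2 + x ^ 4 / 24 := by
  wlog hx : 0 ≤ x generalizing x
  · have := this (-x) (by linarith)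
    simpa [Even.neg_pow (show Even 4 by decide)] using this
  have hd : ∀ y : ℝ, HasDerivAt (fun y => 1 - y ^ 2 / 2 + y ^ 4 / 24 - Real.cos y)
      (Real.sin y - (y - y ^ 3 / 6)) y := by
    intro y
    have h1 := ((hasDerivAt_pow 2 y).div_const 2).const_sub 1
    have h2 := (hasDerivAt_pow 4 y).div_const 24
    refine ((h1.add h2).sub (Real.hasDerivAt_cos y)).congr_deriv ?_
    norm_num; ring
  have hm : MonotoneOn (fun y => 1 - y ^ 2 / 2 + y ^ 4 / 24 - Real.cos y) (Set.Ici 0) := by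
    refine monotoneOn_of_deriv_nonneg (convex_Ici 0)
      (fun y _ => (hd y).continuousAt.continuousWithinAt)
      (fun y _ => (hd y).differentiableAt.differentiableWithinAt) fun y hy => ?_
    rw [interior_Ici] at hy
    rw [(hd y).deriv]
    linarith [Real.sin_ge_sub_cube (le_of_lt hy)]
  have := hm (Set.self_mem_Ici) hx hx
  norm_num at this
  linarith

/-- normalized weights -/
noncomputable def wt (N : ℕ) (k : ℤ) : ℝ :=
  sample N k / ∑ i ∈ Finset.Icc (-(N : ℤ)) N, sample N i

/-- the kernel polynomial in the cosine -/
noncomputable def kerPoly (N : ℕ) : Polynomial ℝ :=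
  ∑ k ∈ Finset.Icc (-(N : ℤ)) N, wt N k • Polynomial.Chebyshev.T ℝ k

/-- the kernel on the circle -/
noncomputable def ker (N : ℕ) (t : ℝ) : ℝ :=
  ∑ k ∈ Finset.Icc (-(N : ℤ)) N, wt N k * Real.cos (k * t)

/-- the first derivative of the kernel -/
noncomputable def kerD (N : ℕ) (t : ℝ) : ℝ :=
  ∑ k ∈ Finset.Icc (-(N : ℤ)) N, wt N k * (-(k * Real.sin (k * t)))

/-- the second derivative of the kernel -/
noncomputable def kerDD (N : ℕ) (t : ℝ) : ℝ :=
  ∑ k ∈ Finset.Icc (-(N : ℤ)) N, wt N k * (-(k ^ 2 * Real.cos (k * t)))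

lemma hasDerivAt_ker (N : ℕ) (t : ℝ) : HasDerivAt (ker N) (kerD N t) t := by
  refine HasDerivAt.fun_sum fun k _ => HasDerivAt.const_mul _ ?_
  have h := ((hasDerivAt_id t).const_mul (k : ℝ)).cos
  refine h.congr_deriv ?_
  simp; ring

lemma hasDerivAt_kerD (N : ℕ) (t : ℝ) : HasDerivAt (kerD N) (kerDD N t) t := by
  refine HasDerivAt.fun_sum fun k _ => HasDerivAt.const_mul _ ?_
  have h := ((((hasDerivAt_id t).const_mul (k : ℝ)).sin).const_mul (k : ℝ)).neg
  refine h.congr_deriv ?_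
  simp; ring

lemma kerPoly_eval_cos (N : ℕ) (t : ℝ) : (kerPoly N).eval (Real.cos t) = ker N t := by
  rw [kerPoly, ker, Polynomial.eval_finsetSum]
  refine Finset.sum_congr rfl fun k _ => ?_
  rw [Polynomial.eval_smul, Polynomial.Chebyshev.T_real_cos, smul_eq_mul]

lemma kerD_eq (N : ℕ) (t : ℝ) :
    kerD N t = -(Real.sin t * (kerPoly N).derivative.eval (Real.cos t)) := by
  have h1 := ((kerPoly N).hasDerivAt (Real.cos t)).comp t (Real.hasDerivAt_cos t)
  have h2 : HasDerivAt (ker N) _ t := h1.congr_of_eventuallyEq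
    (Filter.Eventually.of_forall fun s => (kerPoly_eval_cos N s).symm)
  rw [(hasDerivAt_ker N t).unique h2]
  ring

lemma kerDD_eq (N : ℕ) (t : ℝ) :
    kerDD N t = Real.sin t ^ 2 * (kerPoly N).derivative.derivative.eval (Real.cos t) -
      Real.cos t * (kerPoly N).derivative.eval (Real.cos t) := by
  have h1 := ((kerPoly N).derivative.hasDerivAt (Real.cos t)).comp t (Real.hasDerivAt_cos t)
  have h2 := ((Real.hasDerivAt_sin t).mul h1).neg
  have h3 : HasDerivAt (kerD N) _ t := h2.congr_of_eventuallyEq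
    (Filter.Eventually.of_forall fun s => kerD_eq N s)
  rw [(hasDerivAt_kerD N t).unique h3]
  simp only [Function.comp]
  ring

lemma sample_nonneg (N : ℕ) (k : ℤ) : 0 ≤ sample N k := spl_seven_nonneg _

lemma gtilde_eq_sample {N : ℕ} {k : ℤ} (hk : k ∈ Finset.Icc (-(N : ℤ)) N) :
    gtilde 8 ((k : ℝ) / (2 * ((N : ℝ) + 1))) = sample N k := by
  have hpos : (0 : ℝ) < N + 1 := by positivity
  rw [Finset.mem_Icc] at hk
  have h1 : -(N : ℝ) ≤ k := by exact_mod_cast hk.1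
  have h2 : (k : ℝ) ≤ N := by exact_mod_cast hk.2
  rw [gtilde, sample, show 2 * ((k : ℝ) / (2 * ((N : ℝ) + 1))) = k / (N + 1) by field_simp]
  refine fspline_succ_eq_spl 6 ?_ ?_
  · rw [le_div_iff₀ hpos]; linarith
  · rw [div_le_iff₀ hpos]; linarith

lemma sigmaT_eq_ker (N : ℕ) (t : ℝ) : sigmaT 8 N t = ker N t := by
  have hg : gnorm 8 N = ∑ i ∈ Finset.Icc (-(N : ℤ)) N, sample N i :=
    Finset.sum_congr rfl fun k hk => gtilde_eq_sample hk
  have hs : ∑ k ∈ Finset.Icc (-(N : ℤ)) (N : ℤ),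
      (gtilde 8 ((k : ℝ) / (2 * ((N : ℝ) + 1))) : ℂ) * Complex.exp ((k : ℂ) * t * Complex.I) =
      ∑ k ∈ Finset.Icc (-(N : ℤ)) (N : ℤ),
      (sample N k : ℂ) * Complex.exp ((k : ℂ) * t * Complex.I) :=
    Finset.sum_congr rfl fun k hk => by rw [gtilde_eq_sample hk]
  rw [sigmaT, hg, hs, ker, Finset.mul_sum, Complex.re_sum]
  refine Finset.sum_congr rfl fun k _ => ?_
  rw [show (k : ℂ) * t * Complex.I = ((k * t : ℝ) : ℂ) * Complex.I by push_cast; ring, wt]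
  rw [show (1 : ℂ) / ((∑ i ∈ Finset.Icc (-(N : ℤ)) N, sample N i : ℝ) : ℂ) *
    ((sample N k : ℂ) * Complex.exp (((k * t : ℝ) : ℂ) * Complex.I)) =
    ((sample N k / ∑ i ∈ Finset.Icc (-(N : ℤ)) N, sample N i : ℝ) : ℂ) *
      Complex.exp (((k * t : ℝ) : ℂ) * Complex.I) by push_cast; ring]
  rw [Complex.re_ofReal_mul, Complex.exp_ofReal_mul_I_re]

section Bounds

variable {N : ℕ}

lemma sum_sample_lower (hN : 20 ≤ N) :
    (N + 1) * (0.999999 / 322560) ≤ ∑ i ∈ Finset.Icc (-(N : ℤ)) N, sample N i := by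
  have h := (abs_le.1 (abs_sum_sample_sub_le hN)).1
  have hp : (0 : ℝ) < N + 1 := by positivity
  have : ((N : ℝ) + 1) * (0.999999 / 322560) ≤
      (N + 1) * (1 / 322560) - (N + 1) * (1 / 4) * (3 / 84 ^ 6) := by
    rw [show ((N : ℝ) + 1) * (1 / 322560) - (N + 1) * (1 / 4) * (3 / 84 ^ 6) =
      (N + 1) * (1 / 322560 - (1 / 4) * (3 / 84 ^ 6)) by ring]
    gcongr
    norm_num
  linarith

lemma sum_sample_upper (hN : 20 ≤ N) :
    ∑ i ∈ Finset.Icc (-(N : ℤ)) N, sample N i ≤ (N + 1) * (1.000001 / 322560) := by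
  have h := (abs_le.1 (abs_sum_sample_sub_le hN)).2
  have hp : (0 : ℝ) < N + 1 := by positivity
  have : (N + 1) * (1 / 322560) + (N + 1) * (1 / 4) * (3 / 84 ^ 6) ≤
      ((N : ℝ) + 1) * (1.000001 / 322560) := by
    rw [show ((N : ℝ) + 1) * (1 / 322560) + (N + 1) * (1 / 4) * (3 / 84 ^ 6) =
      (N + 1) * (1 / 322560 + (1 / 4) * (3 / 84 ^ 6)) by ring]
    gcongr
    norm_num
  linarith

lemma sum_sample_pos (hN : 20 ≤ N) : 0 < ∑ i ∈ Finset.Icc (-(N : ℤ)) N, sample N i :=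
  lt_of_lt_of_le (by positivity) (sum_sample_lower hN)

lemma wt_nonneg (hN : 20 ≤ N) (k : ℤ) : 0 ≤ wt N k :=
  div_nonneg (sample_nonneg N k) (sum_sample_pos hN).le

lemma sum_wt (hN : 20 ≤ N) : ∑ k ∈ Finset.Icc (-(N : ℤ)) N, wt N k = 1 := by
  simp_rw [wt]
  rw [← Finset.sum_div, div_self (sum_sample_pos hN).ne']

/-- the second moment of the weights -/
noncomputable def mom (N : ℕ) : ℝ :=
  ∑ k ∈ Finset.Icc (-(N : ℤ)) N, wt N k * ((k : ℝ) / (N + 1)) ^ 2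

lemma mom_eq : mom N = (∑ k ∈ Finset.Icc (-(N : ℤ)) N, ((k : ℝ) / (N + 1)) ^ 2 * sample N k) /
    ∑ i ∈ Finset.Icc (-(N : ℤ)) N, sample N i := by
  rw [mom, Finset.sum_div]
  exact Finset.sum_congr rfl fun k _ => by rw [wt]; ring

lemma mom_bounds (hN : 20 ≤ N) : 0.0555 ≤ mom N ∧ mom N ≤ 0.0556 := by
  have hS := sum_sample_pos hN
  have hl := sum_sample_lower hN
  have hu := sum_sample_upper hN
  have h := abs_le.1 (abs_sum_sq_mul_sample_sub_le hN)
  have hp : (0 : ℝ) < N + 1 := by positivity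
  rw [mom_eq, le_div_iff₀ hS, div_le_iff₀ hS]
  norm_num at *
  constructor <;> linarith

lemma fourth_moment_le (hN : 20 ≤ N) :
    ∑ k ∈ Finset.Icc (-(N : ℤ)) N, wt N k * ((k : ℝ) / (N + 1)) ^ 4 ≤ 0.0091 := by
  have hS := sum_sample_pos hN
  have hl := sum_sample_lower hN
  have h := abs_le.1 (abs_sum_four_mul_sample_sub_le hN)
  have hp : (0 : ℝ) < N + 1 := by positivity
  have e : ∑ k ∈ Finset.Icc (-(N : ℤ)) N, wt N k * ((k : ℝ) / (N + 1)) ^ 4 =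
      (∑ k ∈ Finset.Icc (-(N : ℤ)) N, ((k : ℝ) / (N + 1)) ^ 4 * sample N k) /
        ∑ i ∈ Finset.Icc (-(N : ℤ)) N, sample N i := by
    rw [Finset.sum_div]
    exact Finset.sum_congr rfl fun k _ => by rw [wt]; ring
  rw [e, div_le_iff₀ hS]
  norm_num at *
  linarith

lemma ker_le (hN : 20 ≤ N) (t : ℝ) : ker N t ≤
    1 - mom N * ((N + 1) * t) ^ 2 / 2 + 0.0091 * ((N + 1) * t) ^ 4 / 24 := by
  have hp : (0 : ℝ) < N + 1 := by positivity
  have h4 := fourth_moment_le hN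
  set τ : ℝ := (N + 1) * t with hτ
  have e : ∀ k : ℤ, (k : ℝ) * t = k / (N + 1) * τ := by intro k; rw [hτ]; field_simp
  calc ker N t ≤ ∑ k ∈ Finset.Icc (-(N : ℤ)) N, wt N k *
        (1 - (k / (N + 1) * τ) ^ 2 / 2 + (k / (N + 1) * τ) ^ 4 / 24) := by
        refine Finset.sum_le_sum fun k _ => mul_le_mul_of_nonneg_left ?_ (wt_nonneg hN k)
        rw [e]; exact cos_le_quartic _
    _ = ∑ k ∈ Finset.Icc (-(N : ℤ)) N, wt N k - mom N * τ ^ 2 / 2 +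
        (∑ k ∈ Finset.Icc (-(N : ℤ)) N, wt N k * ((k : ℝ) / (N + 1)) ^ 4) * τ ^ 4 / 24 := by
        rw [mom, Finset.sum_mul, Finset.sum_mul, Finset.sum_div, Finset.sum_div,
          ← Finset.sum_sub_distrib, ← Finset.sum_add_distrib]
        exact Finset.sum_congr rfl fun k _ => by ring
    _ ≤ _ := by rw [sum_wt hN]; gcongr

lemma le_ker (hN : 20 ≤ N) (t : ℝ) : 1 - mom N * ((N + 1) * t) ^ 2 / 2 ≤ ker N t := by
  have hp : (0 : ℝ) < N + 1 := by positivity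
  set τ : ℝ := (N + 1) * t with hτ
  have e : ∀ k : ℤ, (k : ℝ) * t = k / (N + 1) * τ := by intro k; rw [hτ]; field_simp
  calc 1 - mom N * τ ^ 2 / 2 = ∑ k ∈ Finset.Icc (-(N : ℤ)) N, wt N k *
        (1 - (k / (N + 1) * τ) ^ 2 / 2) := by
        rw [mom, Finset.sum_mul, Finset.sum_div, eq_comm]
        refine Eq.trans ?_ (congrArg (· - _) (sum_wt hN))
        rw [← Finset.sum_sub_distrib]
        exact Finset.sum_congr rfl fun k _ => by ring
    _ ≤ ker N t := by
        refine Finset.sum_le_sum fun k _ => mul_le_mul_of_nonneg_left ?_ (wt_nonneg hN k)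
        rw [e]; exact Real.one_sub_sq_div_two_le_cos

lemma abs_kerD_le (hN : 20 ≤ N) (t : ℝ) :
    |kerD N t| ≤ (N + 1) * (mom N * |(N + 1) * t|) := by
  have hp : (0 : ℝ) < N + 1 := by positivity
  refine (Finset.abs_sum_le_sum_abs _ _).trans ?_
  have e : ((N : ℝ) + 1) * (mom N * |(N + 1) * t|) =
      ∑ k ∈ Finset.Icc (-(N : ℤ)) N, wt N k * (k ^ 2 * |t|) := by
    rw [mom, Finset.sum_mul, Finset.mul_sum]
    refine Finset.sum_congr rfl fun k _ => ?_
    rw [abs_mul, abs_of_pos hp]; field_simp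
  rw [e]
  refine Finset.sum_le_sum fun k _ => ?_
  rw [abs_mul, abs_of_nonneg (wt_nonneg hN k), abs_neg, abs_mul]
  refine mul_le_mul_of_nonneg_left ?_ (wt_nonneg hN k)
  calc |(k : ℝ)| * |Real.sin (k * t)| ≤ |(k : ℝ)| * |k * t| := by
        exact mul_le_mul_of_nonneg_left Real.abs_sin_le_abs (abs_nonneg _)
    _ = k ^ 2 * |t| := by rw [abs_mul, ← mul_assoc, abs_mul_abs_self, pow_two]

lemma abs_re_im_sum_le (F : ℝ → ℝ) (hF : ∀ x, 1 ≤ |x| → F x = 0) {C : ℝ}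
    (hC : DiffBound (1 / ((N + 1 : ℕ) : ℝ)) F 8 (C * (1 / ((N + 1 : ℕ) : ℝ)) ^ 7)) (t : ℝ) :
    (2 * (N + 1) * |Real.sin (t / 2)|) ^ 8 *
      |∑ k ∈ Finset.Icc (-(N : ℤ)) N, F (k / (N + 1)) * Real.cos (k * t)| ≤ C * (N + 1) ∧
    (2 * (N + 1) * |Real.sin (t / 2)|) ^ 8 *
      |∑ k ∈ Finset.Icc (-(N : ℤ)) N, F (k / (N + 1)) * Real.sin (k * t)| ≤ C * (N + 1) := by
  have hp : (0 : ℝ) < N + 1 := by positivity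
  have h := norm_exp_sum_le hF hC t
  set S := ∑ k ∈ Finset.Icc (-(N : ℤ)) N,
    (F (k / (N + 1)) : ℂ) * Complex.exp (k * t * Complex.I) with hS
  have e : ∀ k : ℤ, (k : ℂ) * t * Complex.I = ((k * t : ℝ) : ℂ) * Complex.I := by
    intro k; push_cast; ring
  have hre : S.re = ∑ k ∈ Finset.Icc (-(N : ℤ)) N, F (k / (N + 1)) * Real.cos (k * t) := by
    rw [hS, Complex.re_sum]
    refine Finset.sum_congr rfl fun k _ => ?_
    rw [e, Complex.re_ofReal_mul, Complex.exp_ofReal_mul_I_re]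
  have him : S.im = ∑ k ∈ Finset.Icc (-(N : ℤ)) N, F (k / (N + 1)) * Real.sin (k * t) := by
    rw [hS, Complex.im_sum]
    refine Finset.sum_congr rfl fun k _ => ?_
    rw [e, Complex.im_ofReal_mul, Complex.exp_ofReal_mul_I_im]
  have key : (2 * (N + 1) * |Real.sin (t / 2)|) ^ 8 * ‖S‖ ≤ C * (N + 1) := by
    calc _ = ((N : ℝ) + 1) ^ 8 * ((2 * |Real.sin (t / 2)|) ^ 8 * ‖S‖) := by ring
      _ ≤ ((N : ℝ) + 1) ^ 8 * (C * (1 / ((N + 1 : ℕ) : ℝ)) ^ 7) := by gcongr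
      _ = _ := by push_cast; field_simp
  rw [← hre, ← him]
  exact ⟨(mul_le_mul_of_nonneg_left (Complex.abs_re_le_norm S) (by positivity)).trans key,
    (mul_le_mul_of_nonneg_left (Complex.abs_im_le_norm S) (by positivity)).trans key⟩

lemma decay_aux (hN : 20 ≤ N) {q s c C : ℝ} (hC : 0 ≤ C) (hc : 0 ≤ c) (h : q * |s| ≤ C * (N + 1)) :
    q * |c * s / ∑ i ∈ Finset.Icc (-(N : ℤ)) N, sample N i| ≤ C * 323000 * c := by
  have hS := sum_sample_pos hN
  have hl := sum_sample_lower hN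
  have hp : (0 : ℝ) < N + 1 := by positivity
  rw [abs_div, abs_of_pos hS, abs_mul, abs_of_nonneg hc, ← mul_div_assoc, div_le_iff₀ hS]
  calc q * (c * |s|) = c * (q * |s|) := by ring
    _ ≤ c * (C * (N + 1)) := by gcongr
    _ = C * c * (N + 1) := by ring
    _ ≤ C * c * (323000 * ∑ i ∈ Finset.Icc (-(N : ℤ)) N, sample N i) := by
        gcongr
        norm_num at hl ⊢
        linarith
    _ = _ := by ring

lemma kernel_decay (hN : 20 ≤ N) (t : ℝ) :
    (2 * (N + 1) * |Real.sin (t / 2)|) ^ 8 * |ker N t| ≤ 5168000 ∧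
    (2 * (N + 1) * |Real.sin (t / 2)|) ^ 8 * |kerD N t| ≤ 10336000 * (N + 1) ∧
    (2 * (N + 1) * |Real.sin (t / 2)|) ^ 8 * |kerDD N t| ≤ 27132000 * (N + 1) ^ 2 := by
  have hp : (0 : ℝ) < N + 1 := by positivity
  obtain ⟨d0, d1, d2⟩ := diffBound_pow_mul_spl (E := N + 1) (by omega)
  have z0 : ∀ x, 1 ≤ |x| → spl 0 7 x = 0 := isChain_splineChain.eq_zero 0 (by norm_num)
  have h0 := (abs_re_im_sum_le _ z0 d0 t).1
  have h1 := (abs_re_im_sum_le _ (fun x hx => by rw [z0 x hx, mul_zero]) d1 t).2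
  have h2 := (abs_re_im_sum_le _ (fun x hx => by rw [z0 x hx, mul_zero]) d2 t).1
  have a0 := decay_aux hN (by norm_num) (zero_le_one) h0
  have a1 := decay_aux hN (by norm_num) hp.le h1
  have a2 := decay_aux hN (by norm_num) (by positivity : (0 : ℝ) ≤ (N + 1) ^ 2) h2
  refine ⟨?_, ?_, ?_⟩
  · convert a0 using 2
    · congr 1
      rw [ker, one_mul, Finset.sum_div]
      exact Finset.sum_congr rfl fun k _ => by rw [wt, sample]; ring
    · norm_num
  · convert a1 using 2
    · rw [kerD, ← abs_neg, ← Finset.sum_neg_distrib, Finset.mul_sum, Finset.sum_div]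
      congr 1
      exact Finset.sum_congr rfl fun k _ => by rw [wt, sample]; field_simp
    · norm_num
  · convert a2 using 2
    · rw [kerDD, ← abs_neg, ← Finset.sum_neg_distrib, Finset.mul_sum, Finset.sum_div]
      congr 1
      exact Finset.sum_congr rfl fun k _ => by rw [wt, sample]; field_simp
    · norm_num

lemma ker_zero (hN : 20 ≤ N) : ker N 0 = 1 := by
  simp [ker, sum_wt hN]

lemma kerPoly_derivative_eval_one (N : ℕ) :
    (kerPoly N).derivative.eval 1 = (N + 1) ^ 2 * mom N := by
  have h := kerDD_eq N 0
  simp only [Real.sin_zero, Real.cos_zero] at h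
  have e : kerDD N 0 = -((N + 1) ^ 2 * mom N) := by
    rw [kerDD, mom, Finset.mul_sum, ← Finset.sum_neg_distrib]
    refine Finset.sum_congr rfl fun k _ => ?_
    have hp : (0 : ℝ) < N + 1 := by positivity
    simp only [mul_zero, Real.cos_zero]
    field_simp
  rw [e] at h
  linarith

end Bounds

end

section

/-- The Gram matrix of the unit quaternion of a rotation. -/
noncomputable def quatGram (R : Mat3) : Matrix (Fin 4) (Fin 4) ℝ :=
  !![(1 + R 0 0 + R 1 1 + R 2 2) / 4, (R 2 1 - R 1 2) / 4, (R 0 2 - R 2 0) / 4, (R 1 0 - R 0 1) / 4;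
    (R 2 1 - R 1 2) / 4, (1 + R 0 0 - R 1 1 - R 2 2) / 4, (R 0 1 + R 1 0) / 4, (R 0 2 + R 2 0) / 4;
    (R 0 2 - R 2 0) / 4, (R 0 1 + R 1 0) / 4, (1 - R 0 0 + R 1 1 - R 2 2) / 4, (R 1 2 + R 2 1) / 4;
    (R 1 0 - R 0 1) / 4, (R 0 2 + R 2 0) / 4, (R 1 2 + R 2 1) / 4, (1 - R 0 0 - R 1 1 + R 2 2) / 4]

lemma _root_.IsSO3.mul_transpose {R : Mat3} (h : IsSO3 R) : R * R.transpose = 1 :=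
  mul_eq_one_comm.1 h.1

lemma _root_.IsSO3.inv_eq {R : Mat3} (h : IsSO3 R) : R⁻¹ = R.transpose :=
  Matrix.inv_eq_left_inv h.1

lemma _root_.IsSO3.adjugate_eq {R : Mat3} (h : IsSO3 R) : R.adjugate = R.transpose := by
  have h1 := congrArg (R.transpose * ·) (Matrix.mul_adjugate R)
  simpa [← mul_assoc, h.1, h.2] using h1

lemma quatGram_minor {R : Mat3} (h : IsSO3 R) (i j k : Fin 4) :
    quatGram R i j * quatGram R i k = quatGram R i i * quatGram R j k := by
  have h1 := fun i j => congrFun (congrFun h.1 i) j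
  have h2 := fun i j => congrFun (congrFun h.mul_transpose i) j
  have h3 := fun i j => congrFun (congrFun h.adjugate_eq i) j
  simp only [Matrix.adjugate_fin_three, Matrix.mul_apply, Fin.sum_univ_three,
    Matrix.transpose_apply, Matrix.one_apply] at h1 h2 h3
  have a := h1 0 0
  have b := h1 1 1
  have c := h1 2 2
  have d := h1 0 1
  have e := h1 0 2
  have f := h1 1 2
  have a' := h2 0 0
  have b' := h2 1 1
  have c' := h2 2 2
  have d' := h2 0 1
  have e' := h2 0 2
  have f' := h2 1 2
  have g0 := h3 0 0
  have g1 := h3 0 1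
  have g2 := h3 0 2
  have g3 := h3 1 0
  have g4 := h3 1 1
  have g5 := h3 1 2
  have g6 := h3 2 0
  have g7 := h3 2 1
  have g8 := h3 2 2
  clear h1 h2 h3
  simp [quatGram] at *
  fin_cases i <;> fin_cases j <;> fin_cases k <;> simp <;> linarith

/-- Every rotation matrix comes from a unit quaternion. -/
lemma exists_quat {R : Mat3} (h : IsSO3 R) :
    ∃ q : Fin 4 → ℝ, ∀ j k, q j * q k = quatGram R j k := by
  have hm := quatGram_minor h
  have hs : quatGram R 0 0 + quatGram R 1 1 + quatGram R 2 2 + quatGram R 3 3 = 1 := by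
    simp [quatGram]; ring
  obtain ⟨i, hi⟩ : ∃ i, 0 < quatGram R i i := by
    by_contra! hc
    linarith [hc 0, hc 1, hc 2, hc 3]
  refine ⟨fun j => quatGram R i j / √(quatGram R i i), fun j k => ?_⟩
  rw [div_mul_div_comm, Real.mul_self_sqrt hi.le, hm]
  exact mul_div_cancel_left₀ _ hi.ne'

lemma sum_sq_of_quatGram {R : Mat3} {q : Fin 4 → ℝ} (hq : ∀ j k, q j * q k = quatGram R j k) :
    q 0 ^ 2 + q 1 ^ 2 + q 2 ^ 2 + q 3 ^ 2 = 1 := by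
  simp only [pow_two, hq]
  simp [quatGram]; ring

/-- The trace inner product of two rotations in terms of their quaternions. -/
lemma trace_transpose_mul_eq {x y : Mat3} {p q : Fin 4 → ℝ}
    (hp : ∀ j k, p j * p k = quatGram x j k) (hq : ∀ j k, q j * q k = quatGram y j k) :
    (y.transpose * x).trace = 4 * (∑ i, p i * q i) ^ 2 - 1 := by
  have e : (∑ i, p i * q i) ^ 2 = ∑ i, ∑ j, (p i * p j) * (q i * q j) := by
    rw [pow_two, Finset.sum_mul_sum]
    exact Finset.sum_congr rfl fun i _ => Finset.sum_congr rfl fun j _ => by ring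
  rw [e]
  simp only [hp, hq]
  simp [quatGram, Matrix.trace, Matrix.mul_apply, Fin.sum_univ_three, Fin.sum_univ_four]
  ring

lemma _root_.IsSO3.transpose_mul {x y : Mat3} (hy : IsSO3 y) (hx : IsSO3 x) :
    IsSO3 (y.transpose * x) := by
  refine ⟨?_, by rw [Matrix.det_mul, Matrix.det_transpose, hx.2, hy.2, one_mul]⟩
  rw [Matrix.transpose_mul, Matrix.transpose_transpose, mul_assoc, ← mul_assoc y,
    hy.mul_transpose, one_mul, hx.1]

lemma trace_mem {R : Mat3} (h : IsSO3 R) :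
    -1 ≤ (R.trace - 1) / 2 ∧ (R.trace - 1) / 2 ≤ 1 := by
  obtain ⟨q, hq⟩ := exists_quat h
  have h0 := hq 0 0
  have hs := sum_sq_of_quatGram hq
  have ht : R.trace = 4 * q 0 ^ 2 - 1 := by
    rw [pow_two, h0]
    simp [quatGram, Matrix.trace, Fin.sum_univ_three]; ring
  constructor <;> rw [ht] <;> nlinarith [sq_nonneg (q 0), sq_nonneg (q 1), sq_nonneg (q 2), sq_nonneg (q 3)]

lemma cos_rotAngle {R : Mat3} (h : IsSO3 R) : Real.cos (rotAngle R) = (R.trace - 1) / 2 :=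
  Real.cos_arccos (trace_mem h).1 (trace_mem h).2

lemma Lgen_transpose (i : Fin 3) : (Lgen i).transpose = -Lgen i := by
  fin_cases i <;> ext a b <;> fin_cases a <;> fin_cases b <;> simp [Lgen]

lemma exp_Lgen_transpose (i : Fin 3) (t : ℝ) :
    (NormedSpace.exp (t • Lgen i)).transpose = NormedSpace.exp (-t • Lgen i) := by
  rw [← Matrix.exp_transpose, Matrix.transpose_smul, Lgen_transpose, smul_neg, neg_smul]

lemma isSO3_exp (i : Fin 3) (t : ℝ) : IsSO3 (NormedSpace.exp (t • Lgen i)) := by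
  have key : ∀ s : ℝ, (NormedSpace.exp (s • Lgen i)).transpose *
      NormedSpace.exp (s • Lgen i) = 1 := by
    intro s
    rw [exp_Lgen_transpose, ← Matrix.exp_add_of_commute]
    · rw [← add_smul]; simp
    · exact ((Commute.refl (Lgen i)).smul_right _).smul_left _
  refine ⟨key t, ?_⟩
  have hd : (NormedSpace.exp ((t / 2) • Lgen i)).det ^ 2 = 1 := by
    have := congrArg Matrix.det (key (t / 2))
    rwa [Matrix.det_mul, Matrix.det_transpose, Matrix.det_one, ← pow_two] at this
  have e : t • Lgen i = (t / 2) • Lgen i + (t / 2) • Lgen i := by rw [← add_smul, add_halves]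
  rw [e, Matrix.exp_add_of_commute _ _ (Commute.refl _), Matrix.det_mul, ← pow_two, hd]

lemma _root_.IsSO3.mul {x y : Mat3} (hx : IsSO3 x) (hy : IsSO3 y) : IsSO3 (x * y) := by
  refine ⟨?_, by rw [Matrix.det_mul, hx.2, hy.2, one_mul]⟩
  rw [Matrix.transpose_mul, mul_assoc, ← mul_assoc x.transpose, hx.1, one_mul, hy.1]

section
attribute [local instance] Matrix.linftyOpNormedRing Matrix.linftyOpNormedAlgebra

lemma hasDerivAt_trace_mul_exp (A : Mat3) (i : Fin 3) :
    HasDerivAt (fun t : ℝ => (A * NormedSpace.exp (t • Lgen i)).trace) (A * Lgen i).trace 0 := by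
  have h := hasDerivAt_exp_smul_const (𝕂 := ℝ) (Lgen i) (0 : ℝ)
  simp only [zero_smul, NormedSpace.exp_zero, one_mul] at h
  let T : Mat3 →L[ℝ] ℝ := LinearMap.toContinuousLinearMap
    ((Matrix.traceLinearMap (Fin 3) ℝ ℝ).comp (LinearMap.mulLeft ℝ A))
  exact T.hasFDerivAt.comp_hasDerivAt 0 h

end

variable {N : ℕ} {x y : Mat3}

lemma sigmaK_eq (hx : IsSO3 x) (hy : IsSO3 y) :
    sigmaK 8 N x y = (kerPoly N).eval (((y.transpose * x).trace - 1) / 2) := by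
  rw [sigmaK, sigmaT_eq_ker, ← kerPoly_eval_cos, hy.inv_eq, cos_rotAngle (hy.transpose_mul hx)]

lemma Xx_sigmaK_eq (hx : IsSO3 x) (hy : IsSO3 y) (i : Fin 3) :
    Xx i (sigmaK 8 N) x y = (kerPoly N).derivative.eval (((y.transpose * x).trace - 1) / 2) *
      ((y.transpose * x * Lgen i).trace / 2) := by
  refine HasDerivAt.deriv ?_
  have e : (fun t : ℝ => sigmaK 8 N (x * NormedSpace.exp (t • Lgen i)) y) = fun t =>
      (kerPoly N).eval (((y.transpose * x * NormedSpace.exp (t • Lgen i)).trace - 1) / 2) := by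
    funext t
    rw [sigmaK_eq (hx.mul (isSO3_exp i t)) hy, mul_assoc]
  rw [e]
  have h := ((hasDerivAt_trace_mul_exp (y.transpose * x) i).sub_const 1).div_const 2
  have h2 := ((kerPoly N).hasDerivAt _).comp (0 : ℝ) h
  exact h2.congr_deriv (by simp)

lemma Xy_sigmaK_eq (hx : IsSO3 x) (hy : IsSO3 y) (i : Fin 3) :
    Xy i (sigmaK 8 N) x y = (kerPoly N).derivative.eval (((y.transpose * x).trace - 1) / 2) *
      (-(Lgen i * (y.transpose * x)).trace / 2) := by
  refine HasDerivAt.deriv ?_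
  have e : (fun t : ℝ => sigmaK 8 N x (y * NormedSpace.exp (t • Lgen i))) = fun t =>
      (kerPoly N).eval (((x.transpose * y * NormedSpace.exp (t • Lgen i)).trace - 1) / 2) := by
    funext t
    rw [sigmaK_eq hx (hy.mul (isSO3_exp i t)), ← Matrix.trace_transpose, Matrix.transpose_mul,
      Matrix.transpose_transpose, mul_assoc]
  rw [e]
  have h := ((hasDerivAt_trace_mul_exp (x.transpose * y) i).sub_const 1).div_const 2
  have h2 := ((kerPoly N).hasDerivAt _).comp (0 : ℝ) h
  have t1 : (x.transpose * y).trace = (y.transpose * x).trace := by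
    rw [← Matrix.trace_transpose, Matrix.transpose_mul, Matrix.transpose_transpose]
  have t2 : (x.transpose * y * Lgen i).trace = -(Lgen i * (y.transpose * x)).trace := by
    rw [← Matrix.trace_transpose, Matrix.transpose_mul, Matrix.transpose_mul,
      Matrix.transpose_transpose, Lgen_transpose, neg_mul, Matrix.trace_neg]
  exact h2.congr_deriv (by simp [t1, t2])

lemma Xx_Xy_sigmaK_eq (hx : IsSO3 x) (hy : IsSO3 y) (i j : Fin 3) :
    Xx j (Xy i (sigmaK 8 N)) x y =
      (kerPoly N).derivative.derivative.eval (((y.transpose * x).trace - 1) / 2) *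
        ((y.transpose * x * Lgen j).trace / 2) * (-(Lgen i * (y.transpose * x)).trace / 2) +
      (kerPoly N).derivative.eval (((y.transpose * x).trace - 1) / 2) *
        (-(Lgen i * (y.transpose * x) * Lgen j).trace / 2) := by
  refine HasDerivAt.deriv ?_
  have e : (fun t : ℝ => Xy i (sigmaK 8 N) (x * NormedSpace.exp (t • Lgen j)) y) = fun t =>
      (kerPoly N).derivative.eval
        (((y.transpose * x * NormedSpace.exp (t • Lgen j)).trace - 1) / 2) *
      (-(Lgen i * (y.transpose * x) * NormedSpace.exp (t • Lgen j)).trace / 2) := by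
    funext t
    rw [Xy_sigmaK_eq (hx.mul (isSO3_exp j t)) hy]
    simp only [mul_assoc]
  rw [e]
  have h := ((hasDerivAt_trace_mul_exp (y.transpose * x) j).sub_const 1).div_const 2
  have h2 := (((kerPoly N).derivative.hasDerivAt _).comp (0 : ℝ) h).mul
    ((hasDerivAt_trace_mul_exp (Lgen i * (y.transpose * x)) j).neg.div_const 2)
  exact h2.congr_deriv (by simp)

end

section

variable {N : ℕ} {x y R : Mat3} {q : Fin 4 → ℝ}

lemma rotAngle_nonneg (R : Mat3) : 0 ≤ rotAngle R := Real.arccos_nonneg _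

lemma rotAngle_le_pi (R : Mat3) : rotAngle R ≤ π := Real.arccos_le_pi _

lemma sin_half_rotAngle_nonneg (R : Mat3) : 0 ≤ Real.sin (rotAngle R / 2) :=
  Real.sin_nonneg_of_nonneg_of_le_pi (by linarith [rotAngle_nonneg R])
    (by linarith [rotAngle_le_pi R, Real.pi_pos])

lemma trace_Lgen_mul (hq : ∀ j k, q j * q k = quatGram R j k) (i : Fin 3) :
    (Lgen i * R).trace = -4 * (q 0 * q i.succ) := by
  rw [hq]
  simp only [Matrix.trace_fin_three, Matrix.mul_apply, Fin.sum_univ_three]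
  fin_cases i <;> simp [Lgen, quatGram] <;> ring

lemma sq_quat_zero (hR : IsSO3 R) (hq : ∀ j k, q j * q k = quatGram R j k) :
    2 * q 0 ^ 2 - 1 = Real.cos (rotAngle R) := by
  rw [cos_rotAngle hR, pow_two, hq]
  simp [quatGram, Matrix.trace, Fin.sum_univ_three]; ring

lemma sum_sq_quat_succ (hR : IsSO3 R) (hq : ∀ j k, q j * q k = quatGram R j k) :
    q 1 ^ 2 + q 2 ^ 2 + q 3 ^ 2 = Real.sin (rotAngle R / 2) ^ 2 := by
  have h1 := sq_quat_zero hR hq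
  have h2 := sum_sq_of_quatGram hq
  have h3 := Real.cos_sq (rotAngle R / 2)
  have h4 := Real.sin_sq_add_cos_sq (rotAngle R / 2)
  rw [mul_div_cancel₀ _ (two_ne_zero' ℝ)] at h3
  linarith

lemma abs_quat_succ_le (hR : IsSO3 R) (hq : ∀ j k, q j * q k = quatGram R j k) (i : Fin 3) :
    |q i.succ| ≤ Real.sin (rotAngle R / 2) := by
  refine abs_le_of_sq_le_sq ?_ (sin_half_rotAngle_nonneg R)
  rw [← sum_sq_quat_succ hR hq]
  fin_cases i <;> simp <;> nlinarith [sq_nonneg (q 1), sq_nonneg (q 2), sq_nonneg (q 3)]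

lemma trace_Lgen_mul_Lgen (hR : IsSO3 R) (hq : ∀ j k, q j * q k = quatGram R j k) (i j : Fin 3) :
    |-(Lgen i * R * Lgen j).trace / 2 - ((if i = j then q 0 ^ 2 else 0) - q i.succ * q j.succ)| ≤
      |q 0| * Real.sin (rotAngle R / 2) := by
  have h : ∀ i : Fin 3, |q 0 * q i.succ| ≤ |q 0| * Real.sin (rotAngle R / 2) := fun i => by
    rw [abs_mul]
    exact mul_le_mul_of_nonneg_left (abs_quat_succ_le hR hq i) (abs_nonneg _)
  have h0 := mul_nonneg (abs_nonneg (q 0)) (sin_half_rotAngle_nonneg R)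
  have h1 := abs_le.1 (h 0)
  have h2 := abs_le.1 (h 1)
  have h3 := abs_le.1 (h 2)
  simp only [pow_two, hq] at h1 h2 h3 ⊢
  rw [abs_le]
  simp only [Matrix.trace_fin_three, Matrix.mul_apply, Fin.sum_univ_three]
  fin_cases i <;> fin_cases j <;> simp [Lgen, quatGram] at h1 h2 h3 ⊢ <;>
    constructor <;> linarith

lemma sum_abs_le (v : Fin 3 → ℝ) {s : ℝ} (hs : 0 ≤ s) (h : v 0 ^ 2 + v 1 ^ 2 + v 2 ^ 2 ≤ s ^ 2) :
    ∑ i, |v i| ≤ 7 / 4 * s := by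
  rw [Fin.sum_univ_three]
  refine (sq_le_sq₀ (by positivity) (by positivity)).1 ?_
  nlinarith [sq_abs (v 0), sq_abs (v 1), sq_abs (v 2), sq_nonneg (|v 0| - |v 1|),
    sq_nonneg (|v 0| - |v 2|), sq_nonneg (|v 1| - |v 2|)]

lemma sigmaK_eq_ker : sigmaK 8 N x y = ker N (rotAngle (y⁻¹ * x)) := sigmaT_eq_ker _ _

lemma kerD_sq (hR : IsSO3 R) (hq : ∀ j k, q j * q k = quatGram R j k) :
    kerD N (rotAngle R) ^ 2 =
      ((kerPoly N).derivative.eval (Real.cos (rotAngle R)) * (2 * q 0)) ^ 2 *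
        Real.sin (rotAngle R / 2) ^ 2 := by
  have h1 := sq_quat_zero hR hq
  have h2 := sum_sq_of_quatGram hq
  have h3 := sum_sq_quat_succ hR hq
  have h4 : Real.sin (rotAngle R) ^ 2 = 4 * q 0 ^ 2 * Real.sin (rotAngle R / 2) ^ 2 := by
    rw [Real.sin_sq, ← h1, ← h3]
    linear_combination (-4) * q 0 ^ 2 * h2
  rw [kerD_eq, neg_sq, mul_pow, h4]
  ring

lemma sum_sq_deriv (hR : IsSO3 R) (hq : ∀ j k, q j * q k = quatGram R j k) :
    ((kerPoly N).derivative.eval (Real.cos (rotAngle R)) * (2 * (q 0 * q 1))) ^ 2 +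
    ((kerPoly N).derivative.eval (Real.cos (rotAngle R)) * (2 * (q 0 * q 2))) ^ 2 +
    ((kerPoly N).derivative.eval (Real.cos (rotAngle R)) * (2 * (q 0 * q 3))) ^ 2 =
    |kerD N (rotAngle R)| ^ 2 := by
  rw [sq_abs, kerD_sq hR hq, ← sum_sq_quat_succ hR hq]
  ring

lemma Xx_sigmaK_quat (hx : IsSO3 x) (hy : IsSO3 y)
    (hq : ∀ j k, q j * q k = quatGram (y.transpose * x) j k) (i : Fin 3) :
    Xx i (sigmaK 8 N) x y = -((kerPoly N).derivative.eval (Real.cos (rotAngle (y⁻¹ * x))) *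
      (2 * (q 0 * q i.succ))) := by
  rw [Xx_sigmaK_eq hx hy, Matrix.trace_mul_comm (y.transpose * x), trace_Lgen_mul hq, hy.inv_eq,
    cos_rotAngle (hy.transpose_mul hx)]
  ring

lemma Xy_sigmaK_quat (hx : IsSO3 x) (hy : IsSO3 y)
    (hq : ∀ j k, q j * q k = quatGram (y.transpose * x) j k) (i : Fin 3) :
    Xy i (sigmaK 8 N) x y = (kerPoly N).derivative.eval (Real.cos (rotAngle (y⁻¹ * x))) *
      (2 * (q 0 * q i.succ)) := by
  rw [Xy_sigmaK_eq hx hy, trace_Lgen_mul hq, hy.inv_eq, cos_rotAngle (hy.transpose_mul hx)]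
  ring

lemma sum_abs_Xy_le (hx : IsSO3 x) (hy : IsSO3 y) :
    ∑ i, |Xy i (sigmaK 8 N) x y| ≤ 7 / 4 * |kerD N (rotAngle (y⁻¹ * x))| := by
  obtain ⟨q, hq⟩ := exists_quat (hy.transpose_mul hx)
  refine sum_abs_le _ (abs_nonneg _) ?_
  simp only [Xy_sigmaK_quat hx hy hq]
  rw [hy.inv_eq]
  exact (sum_sq_deriv (hy.transpose_mul hx) hq).le

lemma sum_abs_Xx_le (hx : IsSO3 x) (hy : IsSO3 y) :
    ∑ i, |Xx i (sigmaK 8 N) x y| ≤ 7 / 4 * |kerD N (rotAngle (y⁻¹ * x))| := by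
  obtain ⟨q, hq⟩ := exists_quat (hy.transpose_mul hx)
  refine sum_abs_le _ (abs_nonneg _) ?_
  simp only [Xx_sigmaK_quat hx hy hq, neg_sq]
  rw [hy.inv_eq]
  exact (sum_sq_deriv (hy.transpose_mul hx) hq).le

lemma abs_Xy_le (hx : IsSO3 x) (hy : IsSO3 y) (i : Fin 3) :
    |Xy i (sigmaK 8 N) x y| ≤ |kerD N (rotAngle (y⁻¹ * x))| := by
  obtain ⟨q, hq⟩ := exists_quat (hy.transpose_mul hx)
  have h := sum_sq_deriv (N := N) (hy.transpose_mul hx) hq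
  refine abs_le_of_sq_le_sq ?_ (abs_nonneg _)
  rw [Xy_sigmaK_quat hx hy hq, hy.inv_eq, ← h]
  have a := sq_nonneg ((kerPoly N).derivative.eval (Real.cos (rotAngle (y.transpose * x))) *
    (2 * (q 0 * q 1)))
  have b := sq_nonneg ((kerPoly N).derivative.eval (Real.cos (rotAngle (y.transpose * x))) *
    (2 * (q 0 * q 2)))
  have c := sq_nonneg ((kerPoly N).derivative.eval (Real.cos (rotAngle (y.transpose * x))) *
    (2 * (q 0 * q 3)))
  fin_cases i <;> simp <;> linarith

lemma sum_abs_Xx_Xy_le (hx : IsSO3 x) (hy : IsSO3 y)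
    (hpos : 0 < Real.sin (rotAngle (y⁻¹ * x) / 2)) (i : Fin 3) :
    ∑ j, |Xx j (Xy i (sigmaK 8 N)) x y| ≤ 7 / 4 * |kerDD N (rotAngle (y⁻¹ * x))| +
      3 * (|kerD N (rotAngle (y⁻¹ * x))| / Real.sin (rotAngle (y⁻¹ * x) / 2)) := by
  have hR := hy.transpose_mul hx
  obtain ⟨q, hq⟩ := exists_quat hR
  rw [hy.inv_eq] at *
  set R := y.transpose * x with hRdef
  set β := Real.sin (rotAngle R / 2) with hβ
  set c := Real.cos (rotAngle R) with hc
  set P1 := (kerPoly N).derivative.eval c with hP1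
  set P2 := (kerPoly N).derivative.derivative.eval c with hP2
  have hq0 := sq_quat_zero hR hq
  have hs := sum_sq_quat_succ hR hq
  have hn := sum_sq_of_quatGram hq
  have hD : kerDD N (rotAngle R) = 4 * q 0 ^ 2 * β ^ 2 * P2 - (q 0 ^ 2 - β ^ 2) * P1 := by
    rw [kerDD_eq, Real.sin_sq, ← hc, ← hP1, ← hP2]
    rw [← hc] at hq0
    have e1 : q 0 ^ 2 = 1 - β ^ 2 := by linarith
    rw [← hq0, e1]
    ring
  have hK : |P1 * q 0| = |kerD N (rotAngle R)| / β / 2 := by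
    have h := kerD_sq (N := N) hR hq
    rw [← mul_pow, sq_eq_sq_iff_abs_eq_abs] at h
    rw [← hc, ← hP1, ← hβ] at h
    rw [h, abs_mul _ β, abs_of_pos hpos, mul_div_cancel_right₀ _ hpos.ne', mul_left_comm, abs_mul 2,
      abs_two, mul_div_cancel_left₀ _ (two_ne_zero' ℝ)]
  have ha1 : |q 0| ≤ 1 := by
    refine abs_le_of_sq_le_sq ?_ zero_le_one
    nlinarith
  have hb1 : β ≤ 1 := Real.sin_le_one _
  have hqb := abs_quat_succ_le hR hq
  have key : ∀ j : Fin 3, |Xx j (Xy i (sigmaK 8 N)) x y| ≤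
      |q j.succ / β| * |kerDD N (rotAngle R)| + |kerD N (rotAngle R)| / β := by
    intro j
    have he := trace_Lgen_mul_Lgen hR hq i j
    set T := -(Lgen i * R * Lgen j).trace / 2 with hT
    set δ : ℝ := if i = j then 1 else 0 with hδ
    have hif : (if i = j then q 0 ^ 2 else 0) = δ * q 0 ^ 2 := by
      rw [hδ]; split_ifs <;> simp
    rw [hif] at he
    set e := T - (δ * q 0 ^ 2 - q i.succ * q j.succ) with hedef
    have hXX : Xx j (Xy i (sigmaK 8 N)) x y =
        -((q i.succ / β) * (q j.succ / β) * kerDD N (rotAngle R)) +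
        P1 * q 0 * (q 0 * (δ - (q i.succ / β) * (q j.succ / β))) + P1 * e := by
      rw [Xx_Xy_sigmaK_eq hx hy, ← hRdef, ← cos_rotAngle hR, ← hc, ← hP1, ← hP2, ← hT,
        Matrix.trace_mul_comm R, trace_Lgen_mul hq, trace_Lgen_mul hq, hD, hedef]
      field_simp
      ring
    have hni : |q i.succ / β| ≤ 1 := by
      rw [abs_div, abs_of_pos hpos]; exact (div_le_one hpos).2 (hqb i)
    have hnj : |q j.succ / β| ≤ 1 := by
      rw [abs_div, abs_of_pos hpos]; exact (div_le_one hpos).2 (hqb j)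
    have hδn : |δ - (q i.succ / β) * (q j.succ / β)| ≤ 1 := by
      rw [hδ]
      split_ifs with hij
      · subst hij
        rw [← pow_two, abs_le]
        have := (sq_le_one_iff_abs_le_one _).2 hni
        constructor <;> nlinarith [sq_nonneg (q i.succ / β)]
      · rw [zero_sub, abs_neg, abs_mul]
        exact mul_le_one₀ hni (abs_nonneg _) hnj
    have t1 : |(q i.succ / β) * (q j.succ / β) * kerDD N (rotAngle R)| ≤
        |q j.succ / β| * |kerDD N (rotAngle R)| := by
      rw [abs_mul, abs_mul]
      refine mul_le_mul_of_nonneg_right ?_ (abs_nonneg _)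
      exact mul_le_of_le_one_left (abs_nonneg _) hni
    have t2 : |P1 * q 0 * (q 0 * (δ - (q i.succ / β) * (q j.succ / β)))| ≤ |P1 * q 0| := by
      rw [abs_mul, abs_mul (q 0)]
      exact mul_le_of_le_one_right (abs_nonneg _) (mul_le_one₀ ha1 (abs_nonneg _) hδn)
    have t3 : |P1 * e| ≤ |P1 * q 0| := by
      rw [abs_mul, abs_mul P1]
      refine mul_le_mul_of_nonneg_left (he.trans ?_) (abs_nonneg _)
      exact mul_le_of_le_one_right (abs_nonneg _) hb1
    rw [hXX]
    refine (abs_add_le _ _).trans ?_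
    have := abs_add_le (-((q i.succ / β) * (q j.succ / β) * kerDD N (rotAngle R)))
      (P1 * q 0 * (q 0 * (δ - (q i.succ / β) * (q j.succ / β))))
    rw [abs_neg] at this
    linarith
  have hsum := sum_abs_le (fun j : Fin 3 => q j.succ / β) zero_le_one (by
    simp only [div_pow]
    rw [← add_div, ← add_div, one_pow, div_le_one (by positivity)]
    exact hs.le)
  calc _ ≤ ∑ j : Fin 3, (|q j.succ / β| * |kerDD N (rotAngle R)| + |kerD N (rotAngle R)| / β) :=
        Finset.sum_le_sum fun j _ => key j
    _ = (∑ j : Fin 3, |q j.succ / β|) * |kerDD N (rotAngle R)| +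
        3 * (|kerD N (rotAngle R)| / β) := by
        rw [Finset.sum_add_distrib, Finset.sum_mul]; simp
    _ ≤ _ := by
        have := mul_le_mul_of_nonneg_right hsum (abs_nonneg (kerDD N (rotAngle R)))
        linarith

lemma sigmaK_self (hN : 20 ≤ N) (hx : IsSO3 x) : sigmaK 8 N x x = 1 := by
  rw [sigmaK_eq hx hx, hx.1, Matrix.trace_one]
  have := kerPoly_eval_cos N 0
  rw [ker_zero hN, Real.cos_zero] at this
  norm_num [this]

lemma Lgen_trace (i : Fin 3) : (Lgen i).trace = 0 := by
  fin_cases i <;> simp [Lgen, Matrix.trace, Fin.sum_univ_three]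

lemma Xx_sigmaK_self (hx : IsSO3 x) (i : Fin 3) : Xx i (sigmaK 8 N) x x = 0 := by
  rw [Xx_sigmaK_eq hx hx, hx.1, one_mul, Lgen_trace]; simp

lemma Xy_sigmaK_self (hx : IsSO3 x) (i : Fin 3) : Xy i (sigmaK 8 N) x x = 0 := by
  rw [Xy_sigmaK_eq hx hx, hx.1, mul_one, Lgen_trace]; simp

lemma Xx_Xy_sigmaK_self (hx : IsSO3 x) (i j : Fin 3) :
    Xx j (Xy i (sigmaK 8 N)) x x = if i = j then (N + 1) ^ 2 * mom N else 0 := by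
  have hL : (Lgen i * Lgen j).trace = if i = j then -2 else 0 := by
    simp only [Matrix.trace_fin_three, Matrix.mul_apply, Fin.sum_univ_three]
    fin_cases i <;> fin_cases j <;> simp [Lgen] <;> norm_num
  rw [Xx_Xy_sigmaK_eq hx hx, hx.1, mul_one, one_mul, Lgen_trace, Lgen_trace, hL,
    ← kerPoly_derivative_eval_one, Matrix.trace_one]
  split_ifs <;> norm_num

end

section

open MeasureTheory

/-- Points that are `2r`-separated: a volume count. -/
lemma card_le_of_separated_of_dist_lt {ι E : Type*} [NormedAddCommGroup E] [NormedSpace ℝ E]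
    [FiniteDimensional ℝ E] (s : Finset ι) (p : ι → E) (c : E) {r t : ℝ} (hr : 0 < r) (ht : 0 < t)
    (hsep : ∀ i ∈ s, ∀ j ∈ s, i ≠ j → 2 * r ≤ dist (p i) (p j))
    (hc : ∀ i ∈ s, dist (p i) c < t * r) :
    (s.card : ℝ) ≤ (t + 1) ^ Module.finrank ℝ E := by
  borelize E
  let μ : Measure E := Measure.addHaar
  have hR : 0 < (t + 1) * r := by positivity
  have hD : Set.Pairwise (s : Set ι) (Function.onFun Disjoint fun i => Metric.ball (p i) r) :=
    fun i hi j hj hij => Metric.ball_disjoint_ball (by linarith [hsep i hi j hj hij])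
  have hsub : (⋃ i ∈ s, Metric.ball (p i) r) ⊆ Metric.ball c ((t + 1) * r) :=
    Set.iUnion₂_subset fun i hi => Metric.ball_subset_ball' (by linarith [hc i hi])
  have hI : (s.card : ENNReal) * ENNReal.ofReal (r ^ Module.finrank ℝ E) * μ (Metric.ball 0 1) ≤
      ENNReal.ofReal (((t + 1) * r) ^ Module.finrank ℝ E) * μ (Metric.ball 0 1) :=
    calc _ = μ (⋃ i ∈ s, Metric.ball (p i) r) := by
          rw [measure_biUnion_finset hD fun i _ => measurableSet_ball]
          simp only [μ.addHaar_ball_of_pos _ hr]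
          simp only [Finset.sum_const, nsmul_eq_mul, mul_assoc]
      _ ≤ μ (Metric.ball c ((t + 1) * r)) := measure_mono hsub
      _ = _ := by simp only [μ.addHaar_ball_of_pos _ hR]
  have hJ := (ENNReal.mul_le_mul_iff_left (Metric.measure_ball_pos _ _ zero_lt_one).ne'
    measure_ball_lt_top.ne).1 hI
  have hK := ENNReal.toReal_le_of_le_ofReal (by positivity) hJ
  rw [ENNReal.toReal_mul, ENNReal.toReal_natCast, ENNReal.toReal_ofReal (by positivity),
    mul_pow] at hK
  exact le_of_mul_le_mul_right hK (by positivity)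

lemma integrableOn_inv_pow {c : ℝ} (hc : 0 < c) {k : ℕ} (hk : 1 ≤ k) :
    IntegrableOn (fun t : ℝ => (t ^ (k + 1))⁻¹) (Set.Ioi c) ∧
      ∫ t in Set.Ioi c, (t ^ (k + 1))⁻¹ = (c ^ k)⁻¹ / k := by
  have hk' : (1 : ℝ) ≤ k := by exact_mod_cast hk
  have e : Set.EqOn (fun t : ℝ => t ^ (-((k : ℝ) + 1))) (fun t : ℝ => (t ^ (k + 1))⁻¹)
      (Set.Ioi c) := fun t ht => by
    have : (0 : ℝ) ≤ t := (hc.trans ht).le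
    simp only
    rw [Real.rpow_neg this]
    exact_mod_cast congrArg Inv.inv (Real.rpow_natCast t (k + 1))
  refine ⟨(integrableOn_Ioi_rpow_of_lt (by linarith) hc).congr_fun e measurableSet_Ioi, ?_⟩
  rw [← setIntegral_congr_fun measurableSet_Ioi e, integral_Ioi_rpow_of_lt (by linarith) hc]
  have : -((k : ℝ) + 1) + 1 = -k := by ring
  rw [this, Real.rpow_neg hc.le, Real.rpow_natCast, neg_div_neg_eq]

/-- The bound for `∑ w⁻ⁿ`, `n = m + 4`, obtained from a quartic count by integration. -/
noncomputable def layerBound (m : ℕ) (v : ℝ) : ℝ :=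
  (m + 4) * ((v ^ m)⁻¹ / m + 4 * ((v ^ (m + 1))⁻¹ / (m + 1)) + 6 * ((v ^ (m + 2))⁻¹ / (m + 2)) +
    4 * ((v ^ (m + 3))⁻¹ / (m + 3)) + (v ^ (m + 4))⁻¹ / (m + 4))

lemma sum_inv_pow_le_layerBound {ι : Type*} (s : Finset ι) (w : ι → ℝ) {v : ℝ} (hv : 0 < v)
    (hw : ∀ i ∈ s, v ≤ w i)
    (hcard : ∀ t, v < t → ((s.filter fun i => w i < t).card : ℝ) ≤ (t + 1) ^ 4)
    {m : ℕ} (hm : 1 ≤ m) : ∑ i ∈ s, (w i ^ (m + 4))⁻¹ ≤ layerBound m v := by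
  have hn : 1 ≤ m + 4 := by omega
  have hcut : ∀ i ∈ s, IntegrableOn
      ((Set.Ioi (w i)).indicator fun t : ℝ => (t ^ (m + 4 + 1))⁻¹) (Set.Ioi v) ∧
      ∫ t in Set.Ioi v, (Set.Ioi (w i)).indicator (fun t : ℝ => (t ^ (m + 4 + 1))⁻¹) t =
        (w i ^ (m + 4))⁻¹ / (m + 4 : ℕ) := by
    intro i hi
    refine ⟨(integrableOn_inv_pow hv hn).1.indicator measurableSet_Ioi, ?_⟩
    rw [setIntegral_indicator measurableSet_Ioi,
      Set.inter_eq_self_of_subset_right (Set.Ioi_subset_Ioi (hw i hi)),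
      (integrableOn_inv_pow (hv.trans_le (hw i hi)) hn).2]
  have I := fun k => integrableOn_inv_pow hv (k := m + k) (by omega)
  set G : ℝ → ℝ := fun t => (t ^ (m + 0 + 1))⁻¹ + 4 * (t ^ (m + 1 + 1))⁻¹ +
    6 * (t ^ (m + 2 + 1))⁻¹ + 4 * (t ^ (m + 3 + 1))⁻¹ + (t ^ (m + 4 + 1))⁻¹ with hG
  have i0 := (I 0).1
  have i1 := (I 1).1.const_mul 4
  have i2 := (I 2).1.const_mul 6
  have i3 := (I 3).1.const_mul 4
  have i4 := (I 4).1
  have j1 : IntegrableOn (fun t : ℝ => (t ^ (m + 0 + 1))⁻¹ + 4 * (t ^ (m + 1 + 1))⁻¹)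
    (Set.Ioi v) := i0.add i1
  have j2 : IntegrableOn (fun t : ℝ => (t ^ (m + 0 + 1))⁻¹ + 4 * (t ^ (m + 1 + 1))⁻¹ +
    6 * (t ^ (m + 2 + 1))⁻¹) (Set.Ioi v) := j1.add i2
  have j3 : IntegrableOn (fun t : ℝ => (t ^ (m + 0 + 1))⁻¹ + 4 * (t ^ (m + 1 + 1))⁻¹ +
    6 * (t ^ (m + 2 + 1))⁻¹ + 4 * (t ^ (m + 3 + 1))⁻¹) (Set.Ioi v) := j2.add i3
  have hGi : IntegrableOn G (Set.Ioi v) := j3.add i4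
  have hGv : ∫ t in Set.Ioi v, G t = layerBound m v / (m + 4) := by
    rw [hG, integral_add j3 i4, integral_add j2 i3, integral_add j1 i2, integral_add i0 i1,
      integral_const_mul, integral_const_mul, integral_const_mul, (I 0).2, (I 1).2, (I 2).2,
      (I 3).2, (I 4).2, layerBound]
    push_cast
    rw [mul_div_cancel_left₀ _ (by positivity)]
    simp
  have hle : ∫ t in Set.Ioi v, ∑ i ∈ s,
      (Set.Ioi (w i)).indicator (fun t : ℝ => (t ^ (m + 4 + 1))⁻¹) t ≤ ∫ t in Set.Ioi v, G t := by
    refine setIntegral_mono_on (integrable_finsetSum s fun i hi => (hcut i hi).1) hGi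
      measurableSet_Ioi fun t ht => ?_
    have ht0 : 0 < t := hv.trans ht
    have e : ∑ i ∈ s, (Set.Ioi (w i)).indicator (fun t : ℝ => (t ^ (m + 4 + 1))⁻¹) t =
        ((s.filter fun i => w i < t).card : ℝ) * (t ^ (m + 4 + 1))⁻¹ := by
      simp only [Set.indicator_apply, Set.mem_Ioi]
      rw [← Finset.sum_filter, Finset.sum_const, nsmul_eq_mul]
    rw [e]
    refine (mul_le_mul_of_nonneg_right (hcard t ht) (by positivity)).trans_eq ?_
    simp only [hG]
    field_simp
    ring
  rw [integral_finsetSum s fun i hi => (hcut i hi).1, Finset.sum_congr rfl fun i hi =>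
    (hcut i hi).2, hGv, ← Finset.sum_div] at hle
  push_cast at hle
  exact (div_le_div_iff_of_pos_right (by positivity)).1 hle

end

section

variable {N : ℕ} {x y : Mat3}

lemma rotAngle_div_mem (R : Mat3) : 0 ≤ rotAngle R / 4 ∧ rotAngle R / 4 ≤ π / 4 :=
  ⟨by linarith [rotAngle_nonneg R], by linarith [rotAngle_le_pi R]⟩

lemma sin_quarter_nonneg (R : Mat3) : 0 ≤ Real.sin (rotAngle R / 4) :=
  Real.sin_nonneg_of_nonneg_of_le_pi (rotAngle_div_mem R).1
    (by linarith [(rotAngle_div_mem R).2, Real.pi_pos])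

lemma cos_half_rotAngle_eq (hx : IsSO3 x) (hy : IsSO3 y) {p q : Fin 4 → ℝ}
    (hp : ∀ j k, p j * p k = quatGram x j k) (hq : ∀ j k, q j * q k = quatGram y j k) :
    |∑ i, p i * q i| = 1 - 2 * Real.sin (rotAngle (y⁻¹ * x) / 4) ^ 2 := by
  have hR := hy.transpose_mul hx
  have h1 := cos_rotAngle hR
  rw [trace_transpose_mul_eq hp hq, ← hy.inv_eq] at h1
  set ω := rotAngle (y⁻¹ * x) with hω
  have h2 : Real.cos (ω / 2) = 1 - 2 * Real.sin (ω / 4) ^ 2 := by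
    rw [Real.sin_sq, show ω / 2 = 2 * (ω / 4) by ring, Real.cos_two_mul]; ring
  have h3 : 0 ≤ Real.cos (ω / 2) :=
    Real.cos_nonneg_of_neg_pi_div_two_le_of_le
      (by linarith [rotAngle_nonneg (y⁻¹ * x), Real.pi_pos])
      (by linarith [rotAngle_le_pi (y⁻¹ * x)])
  have h4 : Real.cos ω = 2 * Real.cos (ω / 2) ^ 2 - 1 := by
    rw [← Real.cos_two_mul]; congr 1; ring
  rw [← h2, ← abs_of_nonneg h3, ← sq_eq_sq_iff_abs_eq_abs]
  linarith

lemma dist_sq_eq {p q : EuclideanSpace ℝ (Fin 4)}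
    (hp : ∀ j k, p j * p k = quatGram x j k) (hq : ∀ j k, q j * q k = quatGram y j k) :
    dist p q ^ 2 = 2 - 2 * ∑ i, p i * q i := by
  have h1 := sum_sq_of_quatGram hp
  have h2 := sum_sq_of_quatGram hq
  rw [EuclideanSpace.dist_eq, Real.sq_sqrt (Finset.sum_nonneg fun i _ => sq_nonneg _)]
  simp only [Real.dist_eq, sq_abs, Fin.sum_univ_four]
  linear_combination h1 + h2

/-- Unit quaternions of finitely many rotations, all chosen in the half space of a given one. -/
lemma exists_quaternions {ι : Type*} (x : ι → Mat3) (hx : ∀ i, IsSO3 (x i)) (hy : IsSO3 y) :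
    ∃ (c : EuclideanSpace ℝ (Fin 4)) (p : ι → EuclideanSpace ℝ (Fin 4)),
      (∀ i, dist (p i) c = 2 * Real.sin (rotAngle ((x i)⁻¹ * y) / 4)) ∧
      ∀ i j, 2 * Real.sin (rotAngle ((x j)⁻¹ * x i) / 4) ≤ dist (p i) (p j) := by
  obtain ⟨c₀, hc₀⟩ := exists_quat hy
  have hex : ∀ i, ∃ p : EuclideanSpace ℝ (Fin 4), (∀ j k, p j * p k = quatGram (x i) j k) ∧
      0 ≤ ∑ k, c₀ k * p k := by
    intro i
    obtain ⟨p, hp⟩ := exists_quat (hx i)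
    rcases le_total 0 (∑ k, c₀ k * p k) with h | h
    · exact ⟨WithLp.toLp 2 p, hp, h⟩
    · refine ⟨WithLp.toLp 2 (-p), fun j k => ?_, ?_⟩
      · simpa using hp j k
      · simpa using h
  choose p hp hpos using hex
  refine ⟨WithLp.toLp 2 c₀, p, fun i => ?_, fun i j => ?_⟩
  · have h0 := mul_nonneg zero_le_two (sin_quarter_nonneg ((x i)⁻¹ * y))
    rw [← sq_eq_sq₀ dist_nonneg h0, dist_comm, dist_sq_eq (p := WithLp.toLp 2 c₀) hc₀ (hp i)]
    have h := cos_half_rotAngle_eq hy (hx i) hc₀ (hp i)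
    rw [abs_of_nonneg (hpos i)] at h
    simp only at h ⊢
    rw [h]; ring
  · have h0 := mul_nonneg zero_le_two (sin_quarter_nonneg ((x j)⁻¹ * x i))
    rw [← sq_le_sq₀ h0 dist_nonneg, dist_sq_eq (hp i) (hp j)]
    have h := cos_half_rotAngle_eq (hx i) (hx j) (hp i) (hp j)
    have := le_abs_self (∑ k, p i k * p j k)
    nlinarith

lemma sin_le_sin_quarter {R : Mat3} {t : ℝ} (ht : 0 ≤ t) (h : t ≤ rotAngle R) :
    Real.sin (t / 4) ≤ Real.sin (rotAngle R / 4) := by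
  refine Real.sin_le_sin_of_le_of_le_pi_div_two ?_ ?_ ?_ <;>
    linarith [Real.pi_pos, rotAngle_le_pi R]

lemma chord_triangle {x₁ x₂ : Mat3} (h₁ : IsSO3 x₁) (h₂ : IsSO3 x₂) (hy : IsSO3 y)
    (hsep : 36 / ((N : ℝ) + 1) ≤ rotAngle (x₂⁻¹ * x₁)) :
    2 * Real.sin (9 / (N + 1)) ≤ 2 * Real.sin (rotAngle (x₁⁻¹ * y) / 4) +
      2 * Real.sin (rotAngle (x₂⁻¹ * y) / 4) := by
  obtain ⟨c, p, hc, hp⟩ := exists_quaternions ![x₁, x₂]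
    (fun i => by fin_cases i; exacts [h₁, h₂]) hy
  have h0 := hc 0
  have h1 := hc 1
  have h01 := hp 0 1
  simp only [Matrix.cons_val_zero, Matrix.cons_val_one] at h0 h1 h01
  have h3 := sin_le_sin_quarter (by positivity) hsep
  rw [div_right_comm, show (36 : ℝ) / 4 = 9 by norm_num] at h3
  have := dist_triangle_right (p 0) (p 1) c
  linarith

lemma sep_radius_ge (hN : 20 ≤ N) : 8.7 ≤ (N + 1) * Real.sin (9 / ((N : ℝ) + 1)) := by
  have hE : (21 : ℝ) ≤ N + 1 := by
    have : (20 : ℝ) ≤ N := by exact_mod_cast hN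
    linarith
  have h := Real.sin_ge_sub_cube (x := 9 / ((N : ℝ) + 1)) (by positivity)
  have h2 := mul_le_mul_of_nonneg_left h (by positivity : (0 : ℝ) ≤ N + 1)
  refine le_trans ?_ h2
  have e : ((N : ℝ) + 1) * (9 / (N + 1) - (9 / (N + 1)) ^ 3 / 6) = 9 - 121.5 / (N + 1) ^ 2 := by
    field_simp; norm_num; ring
  have : 121.5 / ((N : ℝ) + 1) ^ 2 ≤ 121.5 / 21 ^ 2 := by gcongr
  rw [e]; norm_num at this ⊢; linarith

lemma inv_pow_eight_le {E d r ρ w : ℝ} (hE : 21 ≤ E) (hr : 0 < r) (hρ : 0 < ρ) (hρr : ρ ≤ E * r)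
    (hw : 0 < w) (hd : d = w * r) (hd2 : d ^ 2 ≤ 2) :
    ((4 * E ^ 2 * (d ^ 2 * (1 - d ^ 2 / 4))) ^ 4)⁻¹ ≤
      (w ^ 8)⁻¹ / (2 * ρ) ^ 8 + 30 / (16 * 21 ^ 2) * ((w ^ 6)⁻¹ / (2 * ρ) ^ 6) := by
  have hE0 : 0 < E := by linarith
  have hd0 : 0 < d := by rw [hd]; positivity
  set u := d ^ 2 / 4 with hu
  have hu0 : 0 < u := by positivity
  have hu1 : u ≤ 1 / 2 := by linarith
  have hpoly : 1 ≤ (1 - u) ^ 4 * (1 + 30 * u) := by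
    have : 0 ≤ 26 - 62 * u + 52 * u ^ 2 - 15 * u ^ 3 := by
      nlinarith [mul_nonneg (sq_nonneg u) (by linarith : 0 ≤ 1 / 2 - u), sq_nonneg (u - 31 / 45)]
    have := mul_nonneg hu0.le (mul_nonneg (by linarith : 0 ≤ 1 - 2 * u) this)
    linarith
  have hX : 2 * ρ * w ≤ 2 * E * d := by rw [hd]; nlinarith
  have h1 : 0 < (1 - u) ^ 4 := by have : 0 < 1 - u := by linarith
                                  positivity
  have hinv : ((1 - u) ^ 4)⁻¹ ≤ 1 + 30 * u := by
    rw [inv_le_iff_one_le_mul₀' h1]; exact hpoly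
  calc ((4 * E ^ 2 * (d ^ 2 * (1 - u))) ^ 4)⁻¹
      = ((2 * E * d) ^ 8)⁻¹ * ((1 - u) ^ 4)⁻¹ := by rw [← mul_inv]; congr 1; ring
    _ ≤ ((2 * E * d) ^ 8)⁻¹ * (1 + 30 * u) := by gcongr
    _ = ((2 * E * d) ^ 8)⁻¹ + 30 / (16 * E ^ 2) * ((2 * E * d) ^ 6)⁻¹ := by
        rw [hu]; field_simp; ring
    _ ≤ ((2 * ρ * w) ^ 8)⁻¹ + 30 / (16 * 21 ^ 2) * ((2 * ρ * w) ^ 6)⁻¹ := by gcongr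
    _ = _ := by
        rw [mul_pow _ w, mul_pow _ w, mul_inv, mul_inv]; ring

/-- The constant controlling the decay sums over a separated set. -/
noncomputable def decayConst (v : ℝ) : ℝ :=
  layerBound 4 v / 17.4 ^ 8 + 30 / (16 * 21 ^ 2) * (layerBound 2 v / 17.4 ^ 6)

lemma sum_inv_pow_eight_le (hN : 20 ≤ N) {ι : Type*} (s : Finset ι) (x : ι → Mat3)
    (hx : ∀ i, IsSO3 (x i))
    (hsep : ∀ i ∈ s, ∀ j ∈ s, i ≠ j → 36 / ((N : ℝ) + 1) ≤ rotAngle ((x j)⁻¹ * x i))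
    (hy : IsSO3 y) {v : ℝ} (hv : 0 < v)
    (hfar : ∀ i ∈ s, v * Real.sin (9 / ((N : ℝ) + 1)) ≤
      2 * Real.sin (rotAngle ((x i)⁻¹ * y) / 4)) :
    ∑ i ∈ s, ((2 * (N + 1) * Real.sin (rotAngle ((x i)⁻¹ * y) / 2)) ^ 8)⁻¹ ≤ decayConst v := by
  have hE : (21 : ℝ) ≤ N + 1 := by
    have : (20 : ℝ) ≤ N := by exact_mod_cast hN
    linarith
  have hρ := sep_radius_ge hN
  set r := Real.sin (9 / ((N : ℝ) + 1)) with hrdef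
  have hr : 0 < r := by
    by_contra! h
    nlinarith
  obtain ⟨c, p, hc, hp⟩ := exists_quaternions x hx hy
  set w : ι → ℝ := fun i => dist (p i) c / r with hwdef
  have hdw : ∀ i, dist (p i) c = w i * r := fun i => by rw [hwdef]; field_simp
  have hw : ∀ i ∈ s, v ≤ w i := fun i hi => by
    rw [hwdef]; simp only; rw [le_div_iff₀ hr, hc]; exact hfar i hi
  have hcard : ∀ t, v < t → ((s.filter fun i => w i < t).card : ℝ) ≤ (t + 1) ^ 4 := by
    intro t ht
    have := card_le_of_separated_of_dist_lt (s.filter fun i => w i < t) p c hr (hv.trans ht) ?_ ?_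
    · simpa using this
    · intro i hi j hj hij
      refine le_trans ?_ (hp i j)
      have h3 := sin_le_sin_quarter (by positivity)
        (hsep i (Finset.mem_filter.1 hi).1 j (Finset.mem_filter.1 hj).1 hij)
      rw [div_right_comm, show (36 : ℝ) / 4 = 9 by norm_num] at h3
      linarith
    · intro i hi
      rw [hdw]
      exact mul_lt_mul_of_pos_right (Finset.mem_filter.1 hi).2 hr
  have h8 := sum_inv_pow_le_layerBound s w hv hw hcard (m := 4) (by norm_num)
  have h6 := sum_inv_pow_le_layerBound s w hv hw hcard (m := 2) (by norm_num)
  have hterm : ∀ i ∈ s, ((2 * (N + 1) * Real.sin (rotAngle ((x i)⁻¹ * y) / 2)) ^ 8)⁻¹ ≤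
      (w i ^ 8)⁻¹ / 17.4 ^ 8 + 30 / (16 * 21 ^ 2) * ((w i ^ 6)⁻¹ / 17.4 ^ 6) := by
    intro i hi
    set ω := rotAngle ((x i)⁻¹ * y) with hω
    have hq := hc i
    rw [← hω] at hq
    have hcos : Real.cos (ω / 4) ^ 2 = 1 - (dist (p i) c) ^ 2 / 4 := by
      rw [hq, Real.cos_sq']; ring
    have hcos2 : 0 ≤ Real.cos (ω / 2) := Real.cos_nonneg_of_neg_pi_div_two_le_of_le
      (by linarith [rotAngle_nonneg ((x i)⁻¹ * y), Real.pi_pos])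
      (by linarith [rotAngle_le_pi ((x i)⁻¹ * y)])
    have hd2 : (dist (p i) c) ^ 2 ≤ 2 := by
      rw [show ω / 2 = 2 * (ω / 4) by ring, Real.cos_two_mul, hcos] at hcos2
      linarith
    have hs : Real.sin (ω / 2) ^ 2 = dist (p i) c ^ 2 * (1 - dist (p i) c ^ 2 / 4) := by
      rw [← hcos, hq, show ω / 2 = 2 * (ω / 4) by ring, Real.sin_two_mul]; ring
    have h := inv_pow_eight_le hE hr (ρ := 8.7) (by norm_num) hρ (hv.trans_le (hw i hi)) (hdw i) hd2
    rw [← hs] at h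
    convert h using 2
    · ring
    · norm_num
    · norm_num
  refine (Finset.sum_le_sum hterm).trans ?_
  rw [Finset.sum_add_distrib, ← Finset.mul_sum, ← Finset.sum_div, ← Finset.sum_div, decayConst]
  gcongr

lemma decayConst_two_le : 5168000 * decayConst 2 ≤ 0.0023 := by
  norm_num [decayConst, layerBound]

lemma decayConst_three_halves_le : 5168000 * decayConst (3 / 2) ≤ 0.0064 := by
  norm_num [decayConst, layerBound]

lemma decayConst_one_le : 5168000 * decayConst 1 ≤ 0.0345 := by
  norm_num [decayConst, layerBound]

end

section

variable {N : ℕ} {y : Mat3}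

lemma seven_tenths_le_cos_quarter (R : Mat3) : 0.7 ≤ Real.cos (rotAngle R / 4) := by
  have h := Real.cos_le_cos_of_nonneg_of_le_pi (rotAngle_div_mem R).1
    (by linarith [Real.pi_pos]) (rotAngle_div_mem R).2
  rw [Real.cos_pi_div_four] at h
  have : (1.4 : ℝ) ≤ √2 := Real.le_sqrt_of_sq_le (by norm_num)
  linarith

lemma sin_half_eq (R : Mat3) : Real.sin (rotAngle R / 2) =
    2 * Real.sin (rotAngle R / 4) * Real.cos (rotAngle R / 4) := by
  rw [← Real.sin_two_mul]; ring_nf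

lemma le_inv_mul_of_mul_le {a b c : ℝ} (ha : 0 < a) (h : a * b ≤ c) : b ≤ c * a⁻¹ := by
  rwa [← div_eq_mul_inv, le_div_iff₀' ha]

/-- Total size of the kernel and its first two derivatives over a separated set, all of whose
points stay away from the center `y`. -/
lemma sum_kernel_le (hN : 20 ≤ N) {ι : Type*} (s : Finset ι) (x : ι → Mat3)
    (hx : ∀ i, IsSO3 (x i))
    (hsep : ∀ i j, i ≠ j → 36 / ((N : ℝ) + 1) ≤ rotAngle ((x j)⁻¹ * x i))
    (hy : IsSO3 y) {v : ℝ} (hv : 0 < v)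
    (hfar : ∀ i ∈ s, v * Real.sin (9 / ((N : ℝ) + 1)) ≤
      2 * Real.sin (rotAngle ((x i)⁻¹ * y) / 4)) {D : ℝ} (hD : 5168000 * decayConst v ≤ D) :
    ∑ i ∈ s, |ker N (rotAngle ((x i)⁻¹ * y))| ≤ D ∧
    ∑ i ∈ s, |kerD N (rotAngle ((x i)⁻¹ * y))| ≤ 2 * (N + 1) * D ∧
    ∑ i ∈ s, |kerDD N (rotAngle ((x i)⁻¹ * y))| ≤ 5.25 * (N + 1) ^ 2 * D := by
  have hE : (0 : ℝ) < N + 1 := by positivity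
  have hsum := sum_inv_pow_eight_le hN s x hx (fun i _ j _ => hsep i j) hy hv hfar
  have hr : 0 < Real.sin (9 / ((N : ℝ) + 1)) := by
    have := sep_radius_ge hN
    by_contra! h
    nlinarith
  have hpos : ∀ i ∈ s, 0 < (2 * (N + 1) * Real.sin (rotAngle ((x i)⁻¹ * y) / 2)) ^ 8 := by
    intro i hi
    have h1 : 0 < 2 * Real.sin (rotAngle ((x i)⁻¹ * y) / 4) :=
      (mul_pos hv hr).trans_le (hfar i hi)
    have h2 : 0 < Real.cos (rotAngle ((x i)⁻¹ * y) / 4) :=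
      lt_of_lt_of_le (by norm_num) (seven_tenths_le_cos_quarter _)
    rw [sin_half_eq]
    positivity
  have key : ∀ (f : ℝ → ℝ) (C : ℝ), 0 ≤ C →
      (∀ t, (2 * ((N : ℝ) + 1) * |Real.sin (t / 2)|) ^ 8 * |f t| ≤ C) →
      ∑ i ∈ s, |f (rotAngle ((x i)⁻¹ * y))| ≤ C * decayConst v := by
    intro f C hC hf
    refine le_trans (Finset.sum_le_sum fun i hi => ?_)
      ((Finset.mul_sum _ _ _).symm.le.trans (mul_le_mul_of_nonneg_left hsum hC))
    refine le_inv_mul_of_mul_le (hpos i hi) ?_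
    have := hf (rotAngle ((x i)⁻¹ * y))
    rwa [abs_of_nonneg (sin_half_rotAngle_nonneg _)] at this
  refine ⟨(key _ _ (by norm_num) fun t => (kernel_decay hN t).1).trans hD,
    (key _ _ (by positivity) fun t => (kernel_decay hN t).2.1).trans ?_,
    (key _ _ (by positivity) fun t => (kernel_decay hN t).2.2).trans ?_⟩
  · have := mul_le_mul_of_nonneg_left hD (by positivity : (0 : ℝ) ≤ 2 * (N + 1))
    linarith
  · have := mul_le_mul_of_nonneg_left hD (by positivity : (0 : ℝ) ≤ 5.25 * (N + 1) ^ 2)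
    linarith

lemma abs_add_sum_mul_le {a₀ k₀ A B : ℝ} {a k : Fin 3 → ℝ} (ha₀ : |a₀| ≤ A)
    (ha : ∀ i, |a i| ≤ B) :
    |a₀ * k₀ + ∑ i, a i * k i| ≤ A * |k₀| + B * ∑ i, |k i| := by
  refine (abs_add_le _ _).trans (add_le_add ?_ ?_)
  · rw [abs_mul]; gcongr
  · refine (Finset.abs_sum_le_sum_abs _ _).trans ?_
    rw [Finset.mul_sum]
    refine Finset.sum_le_sum fun i _ => ?_
    rw [abs_mul]
    exact mul_le_mul_of_nonneg_right (ha i) (abs_nonneg _)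

section Coefficients

variable {M : ℕ} {x : Fin M → Mat3}

lemma mulVec_Kmat_zero (α : Fin 4 × Fin M → ℝ) (a : Fin M) :
    (Kmat 8 N x).mulVec α (0, a) = ∑ b, (α (0, b) * sigmaK 8 N (x a) (x b) +
      ∑ k : Fin 3, α (k.succ, b) * Xx k (sigmaK 8 N) (x a) (x b)) := by
  simp only [Matrix.mulVec, dotProduct, Fintype.sum_prod_type_right, Fin.sum_univ_succ (n := 3),
    Fin.sum_univ_three]
  refine Finset.sum_congr rfl fun b _ => ?_
  simp [Kmat, Kblock, toOp, mul_comm]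

lemma mulVec_Kmat_succ (α : Fin 4 × Fin M → ℝ) (i : Fin 3) (a : Fin M) :
    (Kmat 8 N x).mulVec α (i.succ, a) = ∑ b, (α (0, b) * Xy i (sigmaK 8 N) (x a) (x b) +
      ∑ k : Fin 3, α (k.succ, b) * Xx k (Xy i (sigmaK 8 N)) (x a) (x b)) := by
  simp only [Matrix.mulVec, dotProduct, Fintype.sum_prod_type_right, Fin.sum_univ_succ (n := 3),
    Fin.sum_univ_three]
  refine Finset.sum_congr rfl fun b _ => ?_
  fin_cases i <;> simp [Kmat, Kblock, toOp, mul_comm]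

lemma two_mul_sep_radius_le (hsep : ∀ a b, a ≠ b → 36 / ((N : ℝ) + 1) ≤ rotAngle ((x b)⁻¹ * x a))
    {a b : Fin M} (h : b ≠ a) :
    2 * Real.sin (9 / ((N : ℝ) + 1)) ≤ 2 * Real.sin (rotAngle ((x b)⁻¹ * x a) / 4) := by
  have h3 := sin_le_sin_quarter (by positivity) (hsep a b h.symm)
  rw [div_right_comm, show (36 : ℝ) / 4 = 9 by norm_num] at h3
  linarith

lemma sum_offDiag_zero_le (hN : 20 ≤ N) (hx : ∀ a, IsSO3 (x a))
    (hsep : ∀ a b, a ≠ b → 36 / ((N : ℝ) + 1) ≤ rotAngle ((x b)⁻¹ * x a))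
    {α : Fin 4 × Fin M → ℝ} {A B : ℝ} (hA : ∀ j, |α (0, j)| ≤ A)
    (hB : ∀ j (k : Fin 3), |α (k.succ, j)| ≤ B) (hB0 : 0 ≤ B) (hA0 : 0 ≤ A) (a : Fin M) :
    |∑ b ∈ Finset.univ.erase a, (α (0, b) * sigmaK 8 N (x a) (x b) +
      ∑ k : Fin 3, α (k.succ, b) * Xx k (sigmaK 8 N) (x a) (x b))| ≤
      0.0023 * A + 0.00805 * ((N + 1) * B) := by
  obtain ⟨h0, h1, -⟩ := sum_kernel_le hN (Finset.univ.erase a) x hx hsep (hx a) two_pos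
    (fun b hb => two_mul_sep_radius_le hsep (Finset.ne_of_mem_erase hb)) decayConst_two_le
  refine (Finset.abs_sum_le_sum_abs _ _).trans ((Finset.sum_le_sum fun b _ =>
    (abs_add_sum_mul_le (hA b) (hB b)).trans (add_le_add le_rfl
      (mul_le_mul_of_nonneg_left (sum_abs_Xx_le (hx a) (hx b)) hB0))).trans ?_)
  simp only [sigmaK_eq_ker]
  rw [Finset.sum_add_distrib, ← Finset.mul_sum, ← Finset.mul_sum, ← Finset.mul_sum]
  have e0 := mul_le_mul_of_nonneg_left h0 hA0
  have e1 := mul_le_mul_of_nonneg_left h1 hB0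
  linarith

lemma sum_offDiag_succ_le (hN : 20 ≤ N) (hx : ∀ a, IsSO3 (x a))
    (hsep : ∀ a b, a ≠ b → 36 / ((N : ℝ) + 1) ≤ rotAngle ((x b)⁻¹ * x a))
    {α : Fin 4 × Fin M → ℝ} {A B : ℝ} (hA : ∀ j, |α (0, j)| ≤ A)
    (hB : ∀ j (k : Fin 3), |α (k.succ, j)| ≤ B) (hB0 : 0 ≤ B) (hA0 : 0 ≤ A)
    (i : Fin 3) (a : Fin M) :
    |∑ b ∈ Finset.univ.erase a, (α (0, b) * Xy i (sigmaK 8 N) (x a) (x b) +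
      ∑ k : Fin 3, α (k.succ, b) * Xx k (Xy i (sigmaK 8 N)) (x a) (x b))| ≤
      (N + 1) * (0.0046 * A + 0.0223 * ((N + 1) * B)) := by
  have hE : (0 : ℝ) < N + 1 := by positivity
  obtain ⟨-, h1, h2⟩ := sum_kernel_le hN (Finset.univ.erase a) x hx hsep (hx a) two_pos
    (fun b hb => two_mul_sep_radius_le hsep (Finset.ne_of_mem_erase hb)) decayConst_two_le
  have hterm : ∀ b ∈ Finset.univ.erase a,
      |α (0, b) * Xy i (sigmaK 8 N) (x a) (x b) +
        ∑ k : Fin 3, α (k.succ, b) * Xx k (Xy i (sigmaK 8 N)) (x a) (x b)| ≤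
      A * |kerD N (rotAngle ((x b)⁻¹ * x a))| +
        (B * (7 / 4) * |kerDD N (rotAngle ((x b)⁻¹ * x a))| +
          B * ((N + 1) / 4) * |kerD N (rotAngle ((x b)⁻¹ * x a))|) := by
    intro b hb
    set ω := rotAngle ((x b)⁻¹ * x a) with hω
    have hs : 12 / ((N : ℝ) + 1) ≤ Real.sin (ω / 2) := by
      have h1 := two_mul_sep_radius_le hsep (Finset.ne_of_mem_erase hb)
      have h2 := seven_tenths_le_cos_quarter ((x b)⁻¹ * x a)
      have h3 := sep_radius_ge hN
      rw [← hω] at h1 h2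
      rw [hω, sin_half_eq, ← hω, div_le_iff₀ hE]
      have h4 := mul_le_mul_of_nonneg_left h1 hE.le
      nlinarith
    have hpos : 0 < Real.sin (ω / 2) := lt_of_lt_of_le (by positivity) hs
    refine (abs_add_sum_mul_le (hA b) (hB b)).trans (add_le_add
      (mul_le_mul_of_nonneg_left (abs_Xy_le (hx a) (hx b) i) hA0) ?_)
    refine (mul_le_mul_of_nonneg_left (sum_abs_Xx_Xy_le (hx a) (hx b) hpos i) hB0).trans ?_
    rw [← hω]
    have : |kerD N ω| / Real.sin (ω / 2) ≤ |kerD N ω| / (12 / (N + 1)) := by gcongr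
    have e : |kerD N ω| / (12 / ((N : ℝ) + 1)) = (N + 1) / 12 * |kerD N ω| := by field_simp
    rw [e] at this
    have := mul_le_mul_of_nonneg_left this hB0
    linarith
  refine (Finset.abs_sum_le_sum_abs _ _).trans ((Finset.sum_le_sum hterm).trans ?_)
  simp only [Finset.sum_add_distrib, ← Finset.mul_sum]
  have e0 := mul_le_mul_of_nonneg_left h1 hA0
  have e1 := mul_le_mul_of_nonneg_left h1 (by positivity : 0 ≤ B * (((N : ℝ) + 1) / 4))
  have e2 := mul_le_mul_of_nonneg_left h2 (by positivity : 0 ≤ B * (7 / 4))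
  have e3 : 0 ≤ B * ((N : ℝ) + 1) ^ 2 := by positivity
  linarith

/-- Size of the interpolation coefficients. -/
lemma coeff_bounds (hN : 20 ≤ N) (hx : ∀ a, IsSO3 (x a))
    (hsep : ∀ a b, a ≠ b → 36 / ((N : ℝ) + 1) ≤ rotAngle ((x b)⁻¹ * x a))
    {u : Fin M → ℝ} (hu : ∀ i, u i = 1 ∨ u i = -1)
    {α : Fin 4 × Fin M → ℝ} (hα : (Kmat 8 N x).mulVec α = rhsVec u) (j : Fin M) :
    |α (0, j)| ≤ 1.004 ∧ ∀ k : Fin 3, (N + 1) * |α (k.succ, j)| ≤ 0.14 := by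
  have hE : (0 : ℝ) < N + 1 := by positivity
  have : Nonempty (Fin M) := ⟨j⟩
  obtain ⟨j₀, hj₀⟩ := Finite.exists_max fun j => |α (0, j)|
  obtain ⟨⟨k₁, j₁⟩, hj₁⟩ := Finite.exists_max fun p : Fin 3 × Fin M => |α (p.1.succ, p.2)|
  simp only [Prod.forall] at hj₁
  set A := |α (0, j₀)| with hA
  set B := |α (k₁.succ, j₁)| with hB
  have hA0 : 0 ≤ A := abs_nonneg _
  have hB0 : 0 ≤ B := abs_nonneg _
  have row0 := congrFun hα (0, j₀)
  have row1 := congrFun hα (k₁.succ, j₁)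
  rw [mulVec_Kmat_zero, ← Finset.add_sum_erase _ _ (Finset.mem_univ j₀)] at row0
  rw [mulVec_Kmat_succ, ← Finset.add_sum_erase _ _ (Finset.mem_univ j₁)] at row1
  have off0 := sum_offDiag_zero_le hN hx hsep hj₀ (fun j k => hj₁ k j) hB0 hA0 j₀
  have off1 := sum_offDiag_succ_le hN hx hsep hj₀ (fun j k => hj₁ k j) hB0 hA0 k₁ j₁
  have diag1 : ∑ k : Fin 3, α (k.succ, j₁) * Xx k (Xy k₁ (sigmaK 8 N)) (x j₁) (x j₁) =
      α (k₁.succ, j₁) * ((N + 1) ^ 2 * mom N) := by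
    simp [Xx_Xy_sigmaK_self (hx j₁)]
  simp only [sigmaK_self hN (hx _), Xx_sigmaK_self (hx _), mul_zero, Finset.sum_const_zero,
    add_zero, mul_one, rhsVec, if_true] at row0
  simp only [Xy_sigmaK_self (hx _), diag1, mul_zero, zero_add, rhsVec, Fin.succ_ne_zero,
    if_false] at row1
  have hu1 : |u j₀| = 1 := by rcases hu j₀ with h | h <;> simp [h]
  have b0 : A ≤ 1 + (0.0023 * A + 0.00805 * ((N + 1) * B)) := by
    have h := abs_sub (u j₀) (∑ b ∈ Finset.univ.erase j₀, (α (0, b) * sigmaK 8 N (x j₀) (x b) +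
      ∑ k : Fin 3, α (k.succ, b) * Xx k (sigmaK 8 N) (x j₀) (x b)))
    rw [hu1, ← eq_sub_of_add_eq row0, ← hA] at h
    linarith
  obtain ⟨m0, -⟩ := mom_bounds hN
  have b1 : (N + 1) * (0.0555 * ((N + 1) * B)) ≤
      (N + 1) * (0.0046 * A + 0.0223 * ((N + 1) * B)) := by
    refine le_trans ?_ off1
    have hm : 0 ≤ ((N : ℝ) + 1) ^ 2 * mom N := mul_nonneg (by positivity) (by linarith)
    rw [← abs_neg, ← eq_neg_of_add_eq_zero_left row1, abs_mul, abs_of_nonneg hm, ← hB]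
    have := mul_le_mul_of_nonneg_left m0 (by positivity : 0 ≤ B * ((N : ℝ) + 1) ^ 2)
    linarith
  have b2 := le_of_mul_le_mul_left b1 hE
  refine ⟨(hj₀ j).trans ?_, fun k => (mul_le_mul_of_nonneg_left (hj₁ k j) hE.le).trans ?_⟩ <;>
    linarith

end Coefficients

lemma abs_ker_near_le {N : ℕ} (hN : 20 ≤ N) {t : ℝ} (h1 : π / 2 ≤ (N + 1) * t)
    (h2 : (N + 1) * t ≤ 8) :
    1.004 * |ker N t| + 0.245 / (N + 1) * |kerD N t| ≤ 0.98 := by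
  have hE : (0 : ℝ) < N + 1 := by positivity
  obtain ⟨m0, m1⟩ := mom_bounds hN
  have hu := ker_le hN t
  have hl := le_ker hN t
  have hd := abs_kerD_le hN t
  set τ : ℝ := (N + 1) * t with hτ
  have hτ1 : 1.57 ≤ τ := by linarith [Real.pi_gt_d2]
  have hd' : 0.245 / ((N : ℝ) + 1) * |kerD N t| ≤ 0.245 * (0.0556 * τ) := by
    have : |kerD N t| ≤ (N + 1) * (0.0556 * τ) := by
      refine hd.trans ?_
      rw [abs_of_nonneg (by linarith)]
      gcongr
    calc 0.245 / ((N : ℝ) + 1) * |kerD N t| ≤ 0.245 / (N + 1) * ((N + 1) * (0.0556 * τ)) := by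
          gcongr
      _ = _ := by field_simp
  have w1 : 1.57 ^ 2 ≤ τ ^ 2 := by gcongr
  have w2 : τ ^ 2 ≤ 8 ^ 2 := by gcongr
  have hq : 0 ≤ (τ ^ 2 - 1.57 ^ 2) * (8 ^ 2 - τ ^ 2) := mul_nonneg (by linarith) (by linarith)
  have hmu := mul_le_mul_of_nonneg_right m0 (sq_nonneg τ)
  have hml := mul_le_mul_of_nonneg_right m1 (sq_nonneg τ)
  have h4 : τ ^ 4 = τ ^ 2 * τ ^ 2 := by ring
  rw [h4] at hu
  have := sq_nonneg (τ - 2.7)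
  rcases abs_cases (ker N t) with ⟨h, -⟩ | ⟨h, -⟩ <;> rw [h] <;> nlinarith

lemma abs_ker_far_le {N : ℕ} (hN : 20 ≤ N) {t : ℝ} (h1 : 8 < (N + 1) * t) (h2 : t ≤ π) :
    1.004 * |ker N t| + 0.245 / (N + 1) * |kerD N t| ≤ 0.6 := by
  have hE : (21 : ℝ) ≤ N + 1 := by
    have : (20 : ℝ) ≤ N := by exact_mod_cast hN
    linarith
  have hE0 : (0 : ℝ) < N + 1 := by positivity
  have ht : 4 / ((N : ℝ) + 1) ≤ t / 2 := by rw [div_le_iff₀ hE0]; linarith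
  have hsin : Real.sin (4 / ((N : ℝ) + 1)) ≤ Real.sin (t / 2) :=
    Real.sin_le_sin_of_le_of_le_pi_div_two
      (by have : 0 < 4 / ((N : ℝ) + 1) := by positivity
          linarith [Real.pi_pos]) (by linarith) ht
  have hs : 7.9 ≤ 2 * (N + 1) * |Real.sin (t / 2)| := by
    have h := (Real.sin_ge_sub_cube (x := 4 / ((N : ℝ) + 1)) (by positivity)).trans
      (hsin.trans (le_abs_self _))
    refine le_trans ?_ (mul_le_mul_of_nonneg_left h (by positivity))
    have e : 2 * ((N : ℝ) + 1) * (4 / (N + 1) - (4 / (N + 1)) ^ 3 / 6) =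
        8 - 64 / 3 / (N + 1) ^ 2 := by
      field_simp; ring
    have : 64 / 3 / ((N : ℝ) + 1) ^ 2 ≤ 64 / 3 / 21 ^ 2 := by gcongr
    rw [e]; norm_num at this ⊢; linarith
  have hs8 : (7.9 : ℝ) ^ 8 ≤ (2 * (N + 1) * |Real.sin (t / 2)|) ^ 8 := by gcongr
  obtain ⟨d0, d1, -⟩ := kernel_decay hN t
  have k0 := (mul_le_mul_of_nonneg_right hs8 (abs_nonneg (ker N t))).trans d0
  have k1 := (mul_le_mul_of_nonneg_right hs8 (abs_nonneg (kerD N t))).trans d1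
  have k2 : 7.9 ^ 8 * (|kerD N t| / (N + 1)) ≤ 10336000 := by
    rw [← mul_div_assoc, div_le_iff₀ hE0]; exact k1
  rw [div_mul_eq_mul_div, mul_div_assoc]
  norm_num at k0 k2 ⊢
  linarith

/-- The certificate is controlled by its nearest point up to a decay sum over the others. -/
lemma certificate_le {N M : ℕ} (hN : 20 ≤ N) {x : Fin M → Mat3} (hx : ∀ a, IsSO3 (x a))
    (hsep : ∀ a b, a ≠ b → 36 / ((N : ℝ) + 1) ≤ rotAngle ((x b)⁻¹ * x a))
    {α : Fin 4 × Fin M → ℝ} (hα0 : ∀ j, |α (0, j)| ≤ 1.004)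
    (hα1 : ∀ j (k : Fin 3), (N + 1) * |α (k.succ, j)| ≤ 0.14)
    {z : Mat3} (hz : IsSO3 z) (j₀ : Fin M) {v D : ℝ} (hv : 0 < v)
    (hfar : ∀ j, j ≠ j₀ → v * Real.sin (9 / ((N : ℝ) + 1)) ≤
      2 * Real.sin (rotAngle ((x j)⁻¹ * z) / 4)) (hD : 5168000 * decayConst v ≤ D) :
    |∑ j, (α (0, j) * sigmaK 8 N z (x j)
        + ∑ k : Fin 3, α (k.succ, j) * Xy k (sigmaK 8 N) z (x j))| ≤
      1.004 * |ker N (rotAngle ((x j₀)⁻¹ * z))| +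
        0.245 / (N + 1) * |kerD N (rotAngle ((x j₀)⁻¹ * z))| + 1.5 * D := by
  have hE : (0 : ℝ) < N + 1 := by positivity
  have hterm : ∀ j, |α (0, j) * sigmaK 8 N z (x j)
        + ∑ k : Fin 3, α (k.succ, j) * Xy k (sigmaK 8 N) z (x j)| ≤
      1.004 * |ker N (rotAngle ((x j)⁻¹ * z))| +
        0.245 / (N + 1) * |kerD N (rotAngle ((x j)⁻¹ * z))| := by
    intro j
    refine (abs_add_sum_mul_le (hα0 j) (B := 0.14 / (N + 1)) fun k => ?_).trans ?_
    · rw [le_div_iff₀' hE]; exact hα1 j k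
    · rw [sigmaK_eq_ker]
      have := mul_le_mul_of_nonneg_left (sum_abs_Xy_le (N := N) hz (hx j))
        (by positivity : (0 : ℝ) ≤ 0.14 / (N + 1))
      refine add_le_add le_rfl (this.trans (le_of_eq ?_))
      ring
  obtain ⟨h0, h1, -⟩ := sum_kernel_le hN (Finset.univ.erase j₀) x hx hsep hz hv
    (fun j hj => hfar j (Finset.ne_of_mem_erase hj)) hD
  refine (Finset.abs_sum_le_sum_abs _ _).trans ((Finset.sum_le_sum fun j _ => hterm j).trans ?_)
  rw [← Finset.add_sum_erase _ _ (Finset.mem_univ j₀), Finset.sum_add_distrib, ← Finset.mul_sum,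
    ← Finset.mul_sum]
  have hD0 : 0 ≤ D := (Finset.sum_nonneg fun _ _ => abs_nonneg _).trans h0
  have e1 := mul_le_mul_of_nonneg_left h1 (by positivity : (0 : ℝ) ≤ 0.245 / (N + 1))
  have e : 0.245 / ((N : ℝ) + 1) * (2 * (N + 1) * D) = 0.49 * D := by field_simp; ring
  linarith

end

end RotationKernel

open RotationKernel

theorem dual_certificate_bound_away_from_interpolation_points
    (N : ℕ) (hN : 20 ≤ N)
    (M : ℕ) (x : Fin M → Mat3) (hx : ∀ a, IsSO3 (x a)) (hinj : Function.Injective x)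
    (hsep : ∀ a b, a ≠ b → 36 / ((N : ℝ) + 1) ≤ rotAngle ((x b)⁻¹ * (x a)))
    (u : Fin M → ℝ) (hu : ∀ i, u i = 1 ∨ u i = -1)
    (α : Fin 4 × Fin M → ℝ) (hα : (Kmat 8 N x).mulVec α = rhsVec u)
    (z : Mat3) (hz : IsSO3 z) 
    (hfar : ∀ m : Fin M, π / (2 * ((N : ℝ) + 1)) ≤ rotAngle ((x m)⁻¹ * z)) :
    |∑ j, (α (0, j) * sigmaK 8 N z (x j)
        + ∑ k : Fin 3, α (k.succ, j) * Xy k (sigmaK 8 N) z (x j))| < 1 := by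
  rcases isEmpty_or_nonempty (Fin M) with hM | hM
  · simp
  have hE : (0 : ℝ) < N + 1 := by positivity
  have hα0 := fun j => (coeff_bounds hN hx hsep hu hα j).1
  have hα1 := fun j => (coeff_bounds hN hx hsep hu hα j).2
  obtain ⟨j₀, hj₀⟩ := Finite.exists_min fun j => rotAngle ((x j)⁻¹ * z)
  have htri : ∀ j, j ≠ j₀ → 2 * Real.sin (9 / ((N : ℝ) + 1)) ≤
      2 * Real.sin (rotAngle ((x j)⁻¹ * z) / 4) + 2 * Real.sin (rotAngle ((x j₀)⁻¹ * z) / 4) :=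
    fun j hj => chord_triangle (hx j) (hx j₀) hz (hsep j j₀ hj)
  rcases le_or_gt ((N + 1) * rotAngle ((x j₀)⁻¹ * z)) 8 with h | h
  · have hnear : π / 2 ≤ (N + 1) * rotAngle ((x j₀)⁻¹ * z) := by
      have := hfar j₀
      rw [div_le_iff₀ (by positivity)] at this
      linarith
    have hle := Real.sin_le (x := rotAngle ((x j₀)⁻¹ * z) / 4)
      (by linarith [rotAngle_nonneg ((x j₀)⁻¹ * z)])
    have hr := sep_radius_ge hN
    have hle' : rotAngle ((x j₀)⁻¹ * z) ≤ Real.sin (9 / ((N : ℝ) + 1)) :=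
      le_of_mul_le_mul_left (by linarith) hE
    have := certificate_le hN hx hsep hα0 hα1 hz j₀ (v := 3 / 2) (by norm_num)
      (fun j hj => by linarith [htri j hj]) decayConst_three_halves_le
    have := abs_ker_near_le hN hnear h
    linarith
  · have := certificate_le hN hx hsep hα0 hα1 hz j₀ one_pos
      (fun j hj => by
        linarith [htri j hj, sin_le_sin_quarter (rotAngle_nonneg _) (hj₀ j)]) decayConst_one_le
    have := abs_ker_far_le hN h (rotAngle_le_pi _)
    linarith
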